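/- Let A ∈ ℝ^{n×n}, B ∈ ℝ^{n×m}, C ∈ ℝ^{q×n} with (A,B) stabilizable, (C,A) detectable, and all eigenvalues of A in the closed unit disc, and let κ̄ ∈ ℕ satisfy κ̄·ω_max < π/2. Let F ∈ ℝ^{n×q} be such that A − FC is Schur stable. Then there exist ρ > 1/2 and ε* > 0, depending only on A, B and κ̄, such that for every ε ∈ (0, ε*] the following holds. Let N ∈ ℕ, let a_{ij} ≥ 0 (i,j = 1,…,N) with a_{ii} = 0, let ι_i ∈ {0,1}, set d_in(i) = Σ_j a_{ij}, let L be the Laplacian matrix of the weights (a_{ij}), L̄ = L + diag(ι_1,…,ι_N) with entries ℓ̄_{ij}, D_in = diag(d_in(1),…,d_in(N)), and D̄ = I − (2I + D_in)^{−1} L̄, and assume all eigenvalues of D̄ lie in the open unit disc. Let κ_1, …, κ_N ∈ {0,…,κ̄}, let x_r : ℕ → ℝ^n satisfy x_r(k+1) = A x_r(k) with y_r(k) = C x_r(k), and consider for i = 1,…,N the closed-loop partial-state-coupling system x_i(k+1) = A x_i(k) + B u_i(k − κ_i), y_i(k) = C x_i(k), x̂_i(k+1) = A x̂_i(k) + B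 ζ̂_{i2}(k) + F( ζ̄_i(k) − C x̂_i(k) ), χ_i(k+1) = A χ_i(k) + B u_i(k − κ_i) + A x̂_i(k) − A ζ̂_{i1}(k), u_i(k) = −ρ K_ε χ_i(k), where ζ̄_i(k) = (2 + d_in(i))^{−1} [ Σ_{j=1}^N a_{ij}(y_i(k) − y_j(k)) + ι_i (y_i(k) − y_r(k)) ], ζ̂_{i1}(k) = (2 + d_in(i))^{−1} Σ_{j=1}^N ℓ̄_{ij} χ_j(k), and ζ̂_{i2}(k) = (2 + d_in(i))^{−1} Σ_{j=1}^N ℓ̄_{ij} u_j(k − κ_j), with arbitrary initial data on {−κ̄, …, 0}. Then x_i(k) − x_r(k) → 0 as k → ∞ for every i = 1, …, N. -/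

import Mathlib

open Matrix Filter Topology Kronecker
open scoped Classical

noncomputable section

/-- A complex square matrix is Schur stable if all its eigenvalues lie in the open unit disc. -/
def SchurStableC {ι : Type*} [Fintype ι] [DecidableEq ι] (M : Matrix ι ι ℂ) : Prop :=
  ∀ μ ∈ spectrum ℂ M, ‖μ‖ < 1

/-- A real square matrix is Schur stable if all its (complex) eigenvalues lie in the open
unit disc. -/
def SchurStable {ι : Type*} [Fintype ι] [DecidableEq ι] (M : Matrix ι ι ℝ) : Prop :=
  SchurStableC (M.map Complex.ofReal)

/-- All eigenvalues of a real square matrix lie in the closed unit disc. -/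
def EigInClosedUnitDisc {ι : Type*} [Fintype ι] [DecidableEq ι] (M : Matrix ι ι ℝ) : Prop :=
  ∀ μ ∈ spectrum ℂ (M.map Complex.ofReal), ‖μ‖ ≤ 1

/-- The pair (A,B) is stabilizable. -/
def Stabilizable {n m : ℕ} (A : Matrix (Fin n) (Fin n) ℝ) (B : Matrix (Fin n) (Fin m) ℝ) : Prop :=
  ∃ K : Matrix (Fin m) (Fin n) ℝ, SchurStable (A - B * K)

/-- The pair (C,A) is detectable. -/
def Detectable {n q : ℕ} (C : Matrix (Fin q) (Fin n) ℝ) (A : Matrix (Fin n) (Fin n) ℝ) : Prop :=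
  ∃ F : Matrix (Fin n) (Fin q) ℝ, SchurStable (A - F * C)

/-- `P` is a positive definite solution of the discrete algebraic Riccati equation
`AᵀPA − P − AᵀPB(I + BᵀPB)⁻¹BᵀPA + εI = 0`. -/
def IsDARESol {n m : ℕ} (A : Matrix (Fin n) (Fin n) ℝ) (B : Matrix (Fin n) (Fin m) ℝ)
    (ε : ℝ) (P : Matrix (Fin n) (Fin n) ℝ) : Prop :=
  P.PosDef ∧
    Aᵀ * P * A - P - Aᵀ * P * B * (1 + Bᵀ * P * B)⁻¹ * (Bᵀ * P * A)
      + ε • (1 : Matrix (Fin n) (Fin n) ℝ) = 0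

/-- The low-gain feedback `K = (I + BᵀPB)⁻¹BᵀPA`. -/
def gainK {n m : ℕ} (A : Matrix (Fin n) (Fin n) ℝ) (B : Matrix (Fin n) (Fin m) ℝ)
    (P : Matrix (Fin n) (Fin n) ℝ) : Matrix (Fin m) (Fin n) ℝ :=
  (1 + Bᵀ * P * B)⁻¹ * (Bᵀ * P * A)

/-- `ω_max`: zero if `A` is Schur stable, otherwise the largest `ω ∈ [0,π]` with
`det(e^{iω}I − A) = 0`. -/
def omegaMax {n : ℕ} (A : Matrix (Fin n) (Fin n) ℝ) : ℝ :=
  if SchurStable A then 0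
  else sSup {ω : ℝ | ω ∈ Set.Icc 0 Real.pi ∧
    (Complex.exp (ω * Complex.I) • (1 : Matrix (Fin n) (Fin n) ℂ)
      - A.map Complex.ofReal).det = 0}

/-- In-degree `d_in(i) = Σ_j a_{ij}`. -/
def dIn {N : ℕ} (a : Fin N → Fin N → ℝ) (i : Fin N) : ℝ := ∑ j, a i j

/-- The Laplacian matrix of the weights `a`. -/
def lapL {N : ℕ} (a : Fin N → Fin N → ℝ) : Matrix (Fin N) (Fin N) ℝ :=
  Matrix.of fun i j => if i = j then dIn a i else -a i j

/-- The expanded Laplacian `L̄ = L + diag(ι)`. -/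
def lapLbar {N : ℕ} (a : Fin N → Fin N → ℝ) (ι : Fin N → ℝ) : Matrix (Fin N) (Fin N) ℝ :=
  lapL a + Matrix.diagonal ι

/-- `D̄ = I − (2I + D_in)⁻¹ L̄`. -/
def DbarM {N : ℕ} (a : Fin N → Fin N → ℝ) (ι : Fin N → ℝ) : Matrix (Fin N) (Fin N) ℝ :=
  1 - ((2 : ℝ) • (1 : Matrix (Fin N) (Fin N) ℝ) + Matrix.diagonal (dIn a))⁻¹ * lapLbar a ι

section growth
attribute [local instance] Matrix.linftyOpNormedRing Matrix.linftyOpNormedAlgebra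

lemma entry_le_linfty {ι : Type*} [Fintype ι] [DecidableEq ι] (M : Matrix ι ι ℂ) (i j : ι) :
    ‖M i j‖ ≤ ‖M‖ := by
  rw [Matrix.linfty_opNorm_def]
  have h1 : ‖M i j‖₊ ≤ ∑ j, ‖M i j‖₊ :=
    Finset.single_le_sum (f := fun j => ‖M i j‖₊) (fun _ _ => zero_le) (Finset.mem_univ j)
  have h2 : ∑ j, ‖M i j‖₊ ≤ Finset.univ.sup fun i => ∑ j, ‖M i j‖₊ :=
    Finset.le_sup (f := fun i => ∑ j, ‖M i j‖₊) (Finset.mem_univ i)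
  exact_mod_cast h1.trans h2

lemma growth {ι : Type*} [Fintype ι] [DecidableEq ι] (M : Matrix ι ι ℂ) (R : ℝ) (hR : 0 < R)
    (h : ∀ μ ∈ spectrum ℂ M, ‖μ‖ < R) :
    ∃ c r : ℝ, 0 ≤ c ∧ 0 < r ∧ r < R ∧ ∀ (k : ℕ) (i j : ι), ‖(M ^ k) i j‖ ≤ c * r ^ k := by
  rcases isEmpty_or_nonempty ι with he | hne
  · exact ⟨0, R / 2, le_refl _, by linarith, by linarith, fun k i => he.elim i⟩
  have hc : CompleteSpace (Matrix ι ι ℂ) := FiniteDimensional.complete ℂ _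
  have hlt : spectralRadius ℂ M < (R.toNNReal : ENNReal) := by
    apply spectrum.spectralRadius_lt_of_forall_lt
    intro μ hμ
    rw [← NNReal.coe_lt_coe, Real.coe_toNNReal _ hR.le]
    exact h μ hμ
  obtain ⟨r, hr1, hr2⟩ := ENNReal.lt_iff_exists_nnreal_btwn.1 hlt
  have hr0 : (0 : ℝ) < r := by
    have : (0 : ENNReal) < r := lt_of_le_of_lt zero_le hr1
    exact_mod_cast this
  have hrR : (r : ℝ) < R := by
    have : r < R.toNNReal := by exact_mod_cast hr2
    rw [← Real.coe_toNNReal R hR.le]; exact_mod_cast this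
  have hev := (spectrum.pow_nnnorm_pow_one_div_tendsto_nhds_spectralRadius M).eventually
    (gt_mem_nhds hr1)
  obtain ⟨k0, hk0⟩ := eventually_atTop.1 hev
  have hbig : ∀ k ≥ k0 + 1, ‖M ^ k‖ ≤ (r : ℝ) ^ k := by
    intro k hk
    have h1 := hk0 k (by omega)
    have hkpos : (0 : ℝ) < k := by exact_mod_cast (by omega : 0 < k)
    have h2 : ((‖M ^ k‖₊ : ENNReal) ^ (1 / (k : ℝ))) ^ (k : ℝ) ≤ (r : ENNReal) ^ (k : ℝ) :=
      ENNReal.rpow_le_rpow h1.le hkpos.le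
    rw [← ENNReal.rpow_mul, one_div, inv_mul_cancel₀ hkpos.ne', ENNReal.rpow_one,
      ENNReal.rpow_natCast] at h2
    have h3 : ‖M ^ k‖₊ ≤ r ^ k := by exact_mod_cast h2
    exact_mod_cast h3
  refine ⟨1 + ∑ k ∈ Finset.range (k0 + 1), ‖M ^ k‖ / (r : ℝ) ^ k, r, ?_, hr0, hrR, ?_⟩
  · positivity
  intro k i j
  refine (entry_le_linfty _ i j).trans ?_
  by_cases hk : k0 + 1 ≤ k
  · refine (hbig k hk).trans ?_
    have : 0 ≤ ∑ k ∈ Finset.range (k0 + 1), ‖M ^ k‖ / (r : ℝ) ^ k := by positivity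
    have h4 : 0 < (r : ℝ) ^ k := by positivity
    nlinarith
  · have h4 : 0 < (r : ℝ) ^ k := by positivity
    have h5 : ‖M ^ k‖ / (r : ℝ) ^ k ≤ ∑ k ∈ Finset.range (k0 + 1), ‖M ^ k‖ / (r : ℝ) ^ k :=
      Finset.single_le_sum (f := fun k => ‖M ^ k‖ / (r : ℝ) ^ k) (fun _ _ => by positivity)
        (Finset.mem_range.2 (by omega))
    rw [div_le_iff₀ h4] at h5
    nlinarith
end growth

/-- scalar ISS -/
lemma scalar_iss (r : ℝ) (hr0 : 0 ≤ r) (hr : r < 1) (s b : ℕ → ℝ) (hs0 : ∀ k, 0 ≤ s k)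
    (hs : ∀ k, s (k + 1) ≤ r * s k + b k) (hb : Tendsto b atTop (𝓝 0)) :
    Tendsto s atTop (𝓝 0) := by
  rw [Metric.tendsto_atTop]
  intro ε hε
  have h1 : ∀ᶠ k in atTop, b k < (ε / 2) * (1 - r) :=
    hb.eventually (gt_mem_nhds (by nlinarith))
  obtain ⟨k0, hk0⟩ := eventually_atTop.1 h1
  have h2 : ∀ j, s (k0 + j) ≤ ε / 2 + r ^ j * s k0 := by
    intro j
    induction j with
    | zero => simp; linarith
    | succ j ih =>
      have := hs (k0 + j)
      have h3 := hk0 (k0 + j) (by omega)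
      have h4 := mul_le_mul_of_nonneg_left ih hr0
      rw [← add_assoc, pow_succ]
      nlinarith
  have h5 : Tendsto (fun j => r ^ j * s k0) atTop (𝓝 0) := by
    simpa using (tendsto_pow_atTop_nhds_zero_of_lt_one hr0 hr).mul_const (s k0)
  obtain ⟨j0, hj0⟩ := eventually_atTop.1 (h5.eventually (gt_mem_nhds (half_pos hε)))
  refine ⟨k0 + j0, fun k hk => ?_⟩
  obtain ⟨j, rfl⟩ := Nat.exists_eq_add_of_le hk
  have h6 := h2 (j0 + j)
  have h7 := hj0 (j0 + j) (by omega)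
  rw [Real.dist_eq, sub_zero, abs_of_nonneg (hs0 _), add_assoc]
  linarith

lemma iss {𝕜 : Type*} [NormedField 𝕜] {ι : Type*} [Fintype ι] [DecidableEq ι]
    (M : Matrix ι ι 𝕜) (c r : ℝ) (hc : 0 ≤ c) (hr0 : 0 < r) (hr : r < 1)
    (hM : ∀ (k : ℕ) (i j : ι), ‖(M ^ k) i j‖ ≤ c * r ^ k) (W g : ℕ → ι → 𝕜)
    (hW : ∀ k, W (k + 1) = M *ᵥ W k + g k) (hg : Tendsto g atTop (𝓝 0)) :
    Tendsto W atTop (𝓝 0) := by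
  have hmul : ∀ (p : ℕ) (v : ι → 𝕜) (i : ι), ‖((M ^ p) *ᵥ v) i‖ ≤ r ^ p * (c * ∑ j, ‖v j‖) := by
    intro p v i
    rw [Matrix.mulVec, dotProduct]
    refine (norm_sum_le _ _).trans ?_
    rw [Finset.mul_sum, Finset.mul_sum]
    refine Finset.sum_le_sum fun j _ => ?_
    rw [norm_mul]
    have := mul_le_mul_of_nonneg_right (hM p i j) (norm_nonneg (v j))
    linarith
  let S : ℕ → ℝ := fun k => Nat.rec (c * ∑ j, ‖W 0 j‖) (fun k s => r * s + c * ∑ j, ‖g k j‖) k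
  have hS : ∀ k, S (k + 1) = r * S k + c * ∑ j, ‖g k j‖ := fun k => rfl
  have hS0 : ∀ k, 0 ≤ S k := by
    intro k
    induction k with
    | zero => show 0 ≤ c * ∑ j, ‖W 0 j‖; positivity
    | succ k ih => rw [hS]; positivity
  have hb : ∀ k p i, ‖((M ^ p) *ᵥ W k) i‖ ≤ r ^ p * S k := by
    intro k
    induction k with
    | zero => intro p i; exact hmul p _ i
    | succ k ih =>
      intro p i
      rw [hW, Matrix.mulVec_add, Matrix.mulVec_mulVec, ← pow_succ, hS, Pi.add_apply]
      refine (norm_add_le _ _).trans ?_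
      have h1 := ih (p + 1) i
      have h2 := hmul p (g k) i
      rw [pow_succ r] at h1
      nlinarith
  have hgs : Tendsto (fun k => c * ∑ j, ‖g k j‖) atTop (𝓝 0) := by
    have h1 : Tendsto (fun k => ∑ j, ‖g k j‖) atTop (𝓝 (∑ j : ι, (0:ℝ))) := by
      refine tendsto_finsetSum _ fun j _ => ?_
      have := (tendsto_pi_nhds.1 hg j).norm
      simpa using this
    simpa using h1.const_mul c
  have hSt := scalar_iss r hr0.le hr S _ hS0 (fun k => (hS k).le) hgs
  rw [tendsto_pi_nhds]
  intro i
  refine squeeze_zero_norm (fun k => ?_) hSt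
  simpa using hb k 0 i

lemma iss_C {ι : Type*} [Fintype ι] [DecidableEq ι]
    (M : Matrix ι ι ℂ) (hM : SchurStableC M) (W g : ℕ → ι → ℂ)
    (hW : ∀ k, W (k + 1) = M *ᵥ W k + g k) (hg : Tendsto g atTop (𝓝 0)) :
    Tendsto W atTop (𝓝 0) := by
  obtain ⟨c, r, hc, hr0, hr, h⟩ := growth M 1 one_pos hM
  exact iss M c r hc hr0 hr h W g hW hg

lemma growth_real {ι : Type*} [Fintype ι] [DecidableEq ι] (M : Matrix ι ι ℝ) (R : ℝ) (hR : 0 < R)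
    (h : ∀ μ ∈ spectrum ℂ (M.map Complex.ofReal), ‖μ‖ < R) :
    ∃ c r : ℝ, 0 ≤ c ∧ 0 < r ∧ r < R ∧ ∀ (k : ℕ) (i j : ι), ‖(M ^ k) i j‖ ≤ c * r ^ k := by
  obtain ⟨c, r, hc, hr0, hr, h⟩ := growth (M.map Complex.ofReal) R hR h
  refine ⟨c, r, hc, hr0, hr, fun k i j => ?_⟩
  have h1 : (M.map Complex.ofReal) ^ k = (M ^ k).map Complex.ofReal :=
    (Matrix.map_pow M Complex.ofRealHom k).symm
  have := h k i j
  rw [h1, Matrix.map_apply, Complex.norm_real] at this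
  exact this

lemma iss_R {ι : Type*} [Fintype ι] [DecidableEq ι]
    (M : Matrix ι ι ℝ) (hM : SchurStable M) (W g : ℕ → ι → ℝ)
    (hW : ∀ k, W (k + 1) = M *ᵥ W k + g k) (hg : Tendsto g atTop (𝓝 0)) :
    Tendsto W atTop (𝓝 0) := by
  obtain ⟨c, r, hc, hr0, hr, h⟩ := growth_real M 1 one_pos hM
  exact iss M c r hc hr0 hr h W g hW hg

lemma iss_kron {ι κ : Type*} [Fintype ι] [DecidableEq ι] [Fintype κ] [DecidableEq κ]
    (D : Matrix ι ι ℝ) (hD : SchurStable D) (A : Matrix κ κ ℝ) (hA : EigInClosedUnitDisc A)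
    (W g : ℕ → ι × κ → ℝ)
    (hW : ∀ k, W (k + 1) = (D ⊗ₖ A) *ᵥ W k + g k) (hg : Tendsto g atTop (𝓝 0)) :
    Tendsto W atTop (𝓝 0) := by
  obtain ⟨c, r, hc, hr0, hr, h⟩ := growth_real D 1 one_pos hD
  obtain ⟨c', r', hc', hr0', hr', h'⟩ := growth_real A (1 / r) (by positivity) (fun μ hμ =>
    lt_of_le_of_lt (hA μ hμ) (by rw [lt_div_iff₀ hr0]; linarith))
  have hpow : ∀ k : ℕ, (D ⊗ₖ A) ^ k = (D ^ k) ⊗ₖ (A ^ k) := by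
    intro k
    induction k with
    | zero => simp
    | succ k ih => rw [pow_succ, ih, ← Matrix.mul_kronecker_mul, pow_succ, pow_succ]
  refine iss (D ⊗ₖ A) (c * c') (r * r') (by positivity) (by positivity) ?_ ?_ W g hW hg
  · rw [lt_div_iff₀ hr0] at hr'; linarith
  · rintro k ⟨i, a⟩ ⟨j, b⟩
    rw [hpow, Matrix.kroneckerMap_apply, norm_mul, mul_pow]
    calc _ ≤ (c * r ^ k) * (c' * r' ^ k) :=
          mul_le_mul (h k i j) (h' k a b) (norm_nonneg _) (by positivity)
      _ = _ := by ring

lemma mem_spec_iff_det {ι : Type*} [Fintype ι] [DecidableEq ι] (M : Matrix ι ι ℂ) (z : ℂ) :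
    z ∈ spectrum ℂ M ↔ (z • (1 : Matrix ι ι ℂ) - M).det = 0 := by
  rw [spectrum.mem_iff, Matrix.isUnit_iff_isUnit_det, isUnit_iff_ne_zero, not_not,
    Algebra.algebraMap_eq_smul_one]

lemma mem_spec_iff_vec {ι : Type*} [Fintype ι] [DecidableEq ι] (M : Matrix ι ι ℂ) (z : ℂ) :
    z ∈ spectrum ℂ M ↔ ∃ v, v ≠ 0 ∧ M *ᵥ v = z • v := by
  rw [mem_spec_iff_det, ← Matrix.exists_mulVec_eq_zero_iff]
  refine exists_congr fun v => and_congr_right fun _ => ?_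
  rw [Matrix.sub_mulVec, Matrix.smul_mulVec, Matrix.one_mulVec, sub_eq_zero, eq_comm]

lemma det_eq_prod_roots {ι : Type*} [Fintype ι] [DecidableEq ι] (M : Matrix ι ι ℂ) (z : ℂ) :
    (z • (1 : Matrix ι ι ℂ) - M).det = (M.charpoly.roots.map fun a => z - a).prod := by
  have h1 := Matrix.eval_charpoly M z
  have h2 : Matrix.scalar ι z = z • (1 : Matrix ι ι ℂ) := by
    rw [Matrix.scalar_apply, Matrix.smul_one_eq_diagonal]
  rw [h2] at h1
  rw [← h1]
  have h3 := (IsAlgClosed.splits M.charpoly).eq_prod_roots_of_monic M.charpoly_monic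
  conv_lhs => rw [h3]
  rw [Polynomial.eval_multiset_prod, Multiset.map_map]
  simp

lemma root_close {ι : Type*} [Fintype ι] [DecidableEq ι] (M : Matrix ι ι ℂ) (z : ℂ) (δ : ℝ)
    (hδ : 0 < δ) (h : ‖(z • (1 : Matrix ι ι ℂ) - M).det‖ < δ ^ Fintype.card ι) :
    ∃ w ∈ spectrum ℂ M, ‖z - w‖ < δ := by
  by_contra! hcon
  have hcard : Multiset.card M.charpoly.roots = Fintype.card ι := by
    rw [← (IsAlgClosed.splits M.charpoly).natDegree_eq_card_roots, Matrix.charpoly_natDegree_eq_dim]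
  have hroots : ∀ a ∈ M.charpoly.roots, δ ≤ ‖z - a‖ := by
    intro a ha
    apply hcon
    rw [Matrix.mem_spectrum_iff_isRoot_charpoly]
    exact (Polynomial.mem_roots'.1 ha).2
  rw [det_eq_prod_roots, ← hcard] at h
  have key : ∀ s : Multiset ℂ, (∀ a ∈ s, δ ≤ ‖z - a‖) →
      δ ^ Multiset.card s ≤ ‖(s.map fun a => z - a).prod‖ := by
    intro s
    induction s using Multiset.induction_on with
    | empty => intro; simp
    | cons a s ih =>
      intro hs
      rw [Multiset.card_cons, Multiset.map_cons, Multiset.prod_cons, norm_mul, pow_succ, mul_comm]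
      exact mul_le_mul (hs a (Multiset.mem_cons_self a s))
        (ih fun b hb => hs b (Multiset.mem_cons_of_mem hb)) (by positivity) (norm_nonneg _)
  exact absurd h (not_lt.2 (key _ hroots))

lemma homotopy {ι : Type*} [Fintype ι] [DecidableEq ι] (M0 M1 : Matrix ι ι ℂ)
    (h0 : SchurStableC M0)
    (h : ∀ t ∈ Set.Icc (0 : ℝ) 1, ∀ z : ℂ, ‖z‖ = 1 → z ∉ spectrum ℂ (M0 + (t : ℂ) • M1)) :
    SchurStableC (M0 + M1) := by
  let f : ℝ × ℂ → ℂ := fun p => (p.2 • (1 : Matrix ι ι ℂ) - (M0 + (p.1 : ℂ) • M1)).det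
  have hf : Continuous f := by
    apply Continuous.matrix_det
    fun_prop
  -- bound on the roots
  obtain ⟨Rb, hRb⟩ : ∃ Rb : ℝ, ∀ t ∈ Set.Icc (0 : ℝ) 1, ∀ z ∈ spectrum ℂ (M0 + (t : ℂ) • M1),
      ‖z‖ ≤ Rb := by
    let _ := @Matrix.linftyOpNormedRing ι ℂ _ _ _
    let _ := @Matrix.linftyOpNormedAlgebra ℂ ι ℂ _ _ _ _ _
    have hc : CompleteSpace (Matrix ι ι ℂ) := FiniteDimensional.complete ℂ _
    refine ⟨(‖M0‖ + ‖M1‖) * ‖(1 : Matrix ι ι ℂ)‖, fun t ht z hz => ?_⟩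
    refine (spectrum.norm_le_norm_mul_of_mem hz).trans ?_
    refine mul_le_mul_of_nonneg_right ?_ (norm_nonneg _)
    refine (norm_add_le _ _).trans ?_
    rw [norm_smul, Complex.norm_real, Real.norm_of_nonneg ht.1]
    have := norm_nonneg M1
    nlinarith [ht.2]
  let Bad : Set (Set.Icc (0 : ℝ) 1) := {t | ∃ z ∈ spectrum ℂ (M0 + ((t : ℝ) : ℂ) • M1), 1 ≤ ‖z‖}
  have hclosed : IsClosed Bad := by
    have hK : IsCompact (Metric.closedBall (0 : ℂ) Rb) := isCompact_closedBall 0 Rb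
    have hS : IsClosed {p : Set.Icc (0 : ℝ) 1 × ℂ | f (p.1, p.2) = 0 ∧ 1 ≤ ‖p.2‖ ∧ ‖p.2‖ ≤ Rb} := by
      have c1 : Continuous fun p : Set.Icc (0 : ℝ) 1 × ℂ => f (p.1, p.2) := by fun_prop
      have c2 : Continuous fun p : Set.Icc (0 : ℝ) 1 × ℂ => ‖p.2‖ := by fun_prop
      exact IsClosed.inter (isClosed_eq c1 continuous_const)
        (IsClosed.inter (isClosed_le continuous_const c2) (isClosed_le c2 continuous_const))
    have hSc : IsCompact {p : Set.Icc (0 : ℝ) 1 × ℂ | f (p.1, p.2) = 0 ∧ 1 ≤ ‖p.2‖ ∧ ‖p.2‖ ≤ Rb} := by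
      refine IsCompact.of_isClosed_subset (isCompact_univ.prod hK) hS ?_
      rintro ⟨t, z⟩ ⟨_, _, h3⟩
      exact ⟨Set.mem_univ _, by simpa using h3⟩
    have : Bad = Prod.fst '' {p : Set.Icc (0 : ℝ) 1 × ℂ | f (p.1, p.2) = 0 ∧ 1 ≤ ‖p.2‖ ∧ ‖p.2‖ ≤ Rb} := by
      ext t
      constructor
      · rintro ⟨z, hz, hz1⟩
        exact ⟨(t, z), ⟨(mem_spec_iff_det _ _).1 hz, hz1, hRb t t.2 z hz⟩, rfl⟩
      · rintro ⟨⟨t', z⟩, ⟨h1, h2, _⟩, rfl⟩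
        exact ⟨z, (mem_spec_iff_det _ _).2 h1, h2⟩
    rw [this]
    exact (hSc.image continuous_fst).isClosed
  have hopen : IsOpen Bad := by
    rw [isOpen_iff_mem_nhds]
    rintro t ⟨z, hz, hz1⟩
    have hz2 : 1 < ‖z‖ := lt_of_le_of_ne hz1 fun he => h t t.2 z he.symm hz
    have hδ : 0 < ‖z‖ - 1 := by linarith
    have hft : f (t, z) = 0 := (mem_spec_iff_det _ _).1 hz
    have hcont : Continuous fun s : Set.Icc (0 : ℝ) 1 => ‖f (s, z)‖ := by fun_prop
    have hev : ∀ᶠ s : Set.Icc (0 : ℝ) 1 in 𝓝 t, ‖f (s, z)‖ < (‖z‖ - 1) ^ Fintype.card ι := by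
      refine hcont.continuousAt.eventually_lt_const ?_
      show ‖f (t, z)‖ < _
      rw [hft, norm_zero]
      positivity
    filter_upwards [hev] with s hs
    obtain ⟨w, hw, hw1⟩ := root_close _ z _ hδ hs
    refine ⟨w, hw, ?_⟩
    have := norm_sub_norm_le z w
    linarith
  have hclopen : IsClopen Bad := ⟨hclosed, hopen⟩
  have h0' : (⟨0, by simp⟩ : Set.Icc (0 : ℝ) 1) ∉ Bad := by
    rintro ⟨z, hz, hz1⟩
    simp only [Complex.ofReal_zero, zero_smul, add_zero] at hz
    exact absurd (h0 z hz) (not_lt.2 hz1)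
  have hempty : Bad = ∅ := by
    rcases isClopen_iff.1 hclopen with h | h
    · exact h
    · rw [h] at h0'; exact absurd (Set.mem_univ _) h0'
  intro μ hμ
  by_contra hcon
  have : (⟨1, by simp⟩ : Set.Icc (0 : ℝ) 1) ∈ Bad := ⟨μ, by simpa using hμ, not_lt.1 hcon⟩
  rw [hempty] at this
  exact this

section cplx
open scoped ComplexOrder

/-- sesquilinear form -/
def sqf {𝕜 : Type*} [RCLike 𝕜] {n : ℕ} (P : Matrix (Fin n) (Fin n) 𝕜) (x y : Fin n → 𝕜) : 𝕜 :=
  star x ⬝ᵥ (P *ᵥ y)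

lemma star_dot {𝕜 : Type*} [RCLike 𝕜] {a b : ℕ} (B : Matrix (Fin a) (Fin b) 𝕜) (x : Fin b → 𝕜)
    (y : Fin a → 𝕜) : star (B *ᵥ x) ⬝ᵥ y = star x ⬝ᵥ (Bᴴ *ᵥ y) := by
  rw [Matrix.star_mulVec, Matrix.dotProduct_mulVec]

lemma sqf_conj {𝕜 : Type*} [RCLike 𝕜] {n : ℕ} (P : Matrix (Fin n) (Fin n) 𝕜) (hP : Pᴴ = P)
    (x y : Fin n → 𝕜) : star (sqf P x y) = sqf P y x := by
  unfold sqf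
  rw [← Matrix.star_dotProduct, Matrix.star_mulVec, hP, Matrix.dotProduct_mulVec]

lemma pbh_zero {n m : ℕ} (A : Matrix (Fin n) (Fin n) ℂ) (B : Matrix (Fin n) (Fin m) ℂ)
    (P : Matrix (Fin n) (Fin n) ℂ) (hP : P.PosSemidef) (K : Matrix (Fin m) (Fin n) ℂ)
    (hRK : (1 + Bᴴ * P * B) * K = Bᴴ * P * A)
    (hE : Aᴴ * P * A - P - Aᴴ * P * B * K = 0)
    (h1 : ∀ (l : ℂ) (v : Fin n → ℂ), v ≠ 0 → Aᴴ *ᵥ v = l • v → ‖l‖ ≤ 1)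
    (h2 : ∀ (l : ℂ) (v : Fin n → ℂ), v ≠ 0 → Aᴴ *ᵥ v = l • v → Bᴴ *ᵥ v = 0 → ‖l‖ < 1) :
    P = 0 := by
  have hPh : Pᴴ = P := hP.isHermitian
  set R := 1 + Bᴴ * P * B with hR
  have hRpd : R.PosDef := by
    rw [hR]
    exact Matrix.PosDef.one.add_posSemidef (hP.conjTranspose_mul_mul_same B)
  have hRu : IsUnit R.det := (Matrix.isUnit_iff_isUnit_det _).1 hRpd.isUnit
  have hRh : Rᴴ = R := hRpd.isHermitian
  have hK : K = R⁻¹ * (Bᴴ * P * A) := by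
    rw [← hRK, ← Matrix.mul_assoc, Matrix.nonsing_inv_mul _ hRu, Matrix.one_mul]
  have heq : Aᴴ * P * A - P - Aᴴ * P * B * R⁻¹ * (Bᴴ * P * A) = 0 := by
    rw [hK, ← Matrix.mul_assoc] at hE
    exact hE
  set X := P - P * B * R⁻¹ * (Bᴴ * P) with hX
  have hXh : Xᴴ = X := by
    rw [hX]
    simp only [Matrix.conjTranspose_sub, Matrix.conjTranspose_mul, Matrix.conjTranspose_nonsing_inv,
      Matrix.conjTranspose_conjTranspose, hPh, hRh, Matrix.mul_assoc]
  have hAXA : Aᴴ * X * A = P := by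
    have : Aᴴ * X * A - P = 0 := by
      rw [← heq, hX]
      simp only [Matrix.mul_sub, Matrix.sub_mul, Matrix.mul_assoc]
      abel
    exact sub_eq_zero.1 this
  have hXg : X * (1 + B * Bᴴ * P) = P := by
    have e1 : Bᴴ * P * (1 + B * Bᴴ * P) = R * (Bᴴ * P) := by
      rw [hR]
      simp only [Matrix.mul_add, Matrix.add_mul, Matrix.mul_assoc, Matrix.mul_one, Matrix.one_mul]
    rw [hX, Matrix.sub_mul, Matrix.mul_assoc (P * B * R⁻¹), e1, Matrix.mul_assoc (P * B),
      ← Matrix.mul_assoc R⁻¹, Matrix.nonsing_inv_mul _ hRu]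
    simp only [Matrix.mul_add, Matrix.mul_assoc, Matrix.mul_one, Matrix.one_mul]
    abel
  have hXP : X = P * (1 - B * R⁻¹ * (Bᴴ * P)) := by
    rw [hX]
    simp only [Matrix.mul_sub, Matrix.mul_assoc, Matrix.mul_one]
  let V : Submodule ℂ (Fin n → ℂ) := LinearMap.range P.mulVecLin
  let T : (Fin n → ℂ) →ₗ[ℂ] (Fin n → ℂ) := (Aᴴ).mulVecLin
  have hXV : ∀ y, X *ᵥ y ∈ V := by
    intro y
    refine ⟨(1 - B * R⁻¹ * (Bᴴ * P)) *ᵥ y, ?_⟩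
    rw [Matrix.mulVecLin_apply, Matrix.mulVec_mulVec, ← hXP]
  have hle : V ≤ V.map T := by
    rintro _ ⟨y, rfl⟩
    refine ⟨X *ᵥ (A *ᵥ y), hXV _, ?_⟩
    rw [Matrix.mulVecLin_apply, Matrix.mulVecLin_apply, Matrix.mulVec_mulVec, Matrix.mulVec_mulVec,
      hAXA]
  have hVeq : V = V.map T := Submodule.eq_of_le_of_finrank_le hle (Submodule.finrank_map_le T V)
  have hmaps : ∀ v ∈ V, T v ∈ V := fun v hv => by
    rw [hVeq]; exact Submodule.mem_map_of_mem hv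
  let f : Module.End ℂ V := T.restrict hmaps
  have hsurj : Function.Surjective f := by
    rintro ⟨v, hv⟩
    have hv' := hv
    rw [hVeq] at hv'
    obtain ⟨w, hw, hwv⟩ := hv'
    exact ⟨⟨w, hw⟩, Subtype.ext hwv⟩
  have hinj : Function.Injective f := LinearMap.injective_iff_surjective.2 hsurj
  by_contra hne
  have hVne : V ≠ ⊥ := by
    intro hb
    apply hne
    have : P.mulVecLin = 0 := LinearMap.range_eq_bot.1 hb
    ext i j
    have h3 := congrFun (congrArg (fun g => g (Pi.single j 1)) this) i
    simpa using h3
  have : Nontrivial V := (Submodule.nontrivial_iff_ne_bot).2 hVne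
  obtain ⟨l, hl⟩ := Module.End.exists_eigenvalue f
  obtain ⟨⟨v, hv⟩, hfv⟩ := hl.exists_hasEigenvector
  have hv0 : v ≠ 0 := fun h => hfv.2 (Subtype.ext h)
  have hAv : Aᴴ *ᵥ v = l • v := congrArg Subtype.val hfv.apply_eq_smul
  obtain ⟨w, hw⟩ := hv
  rw [Matrix.mulVecLin_apply] at hw
  set g := (1 + B * Bᴴ * P) *ᵥ w with hg
  have hXgv : X *ᵥ g = v := by
    rw [hg, Matrix.mulVec_mulVec, hXg, hw]
  have hzero : X *ᵥ (g - l • (A *ᵥ w)) = 0 := by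
    have e1 : f ⟨_, hXV (g - l • (A *ᵥ w))⟩ = f 0 := by
      rw [map_zero]
      apply Subtype.ext
      show Aᴴ *ᵥ (X *ᵥ (g - l • (A *ᵥ w))) = 0
      rw [Matrix.mulVec_sub, hXgv, Matrix.mulVec_sub, hAv, Matrix.mulVec_smul, Matrix.mulVec_smul,
        Matrix.mulVec_mulVec, Matrix.mulVec_mulVec, hAXA, hw, sub_self]
    exact congrArg Subtype.val (hinj e1)
  rw [Matrix.mulVec_sub, hXgv, Matrix.mulVec_smul, sub_eq_zero] at hzero
  -- g* v computed in two ways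
  have c1 : star g ⬝ᵥ v = l * star l * sqf P w w := by
    rw [hzero, dotProduct_smul, smul_eq_mul]
    have e1 : star g ⬝ᵥ (X *ᵥ (A *ᵥ w)) = star v ⬝ᵥ (A *ᵥ w) := by
      have e0 := star_dot X g (A *ᵥ w)
      rw [hXh, hXgv] at e0
      exact e0.symm
    rw [e1]
    have e2 : star v ⬝ᵥ (A *ᵥ w) = star (Aᴴ *ᵥ v) ⬝ᵥ w := by
      rw [star_dot, Matrix.conjTranspose_conjTranspose]
    rw [e2, hAv, star_smul, smul_dotProduct, smul_eq_mul, ← hw, star_dot, hPh, mul_assoc]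
    rfl
  have c2 : star g ⬝ᵥ v = sqf P w w + star (Bᴴ *ᵥ v) ⬝ᵥ (Bᴴ *ᵥ v) := by
    rw [hg, star_dot, Matrix.conjTranspose_add, Matrix.add_mulVec, dotProduct_add,
      Matrix.conjTranspose_one, Matrix.one_mulVec, star_dot, ← hw]
    simp only [sqf, Matrix.conjTranspose_mul, Matrix.conjTranspose_conjTranspose, hPh, star_dot,
      Matrix.mulVec_mulVec, Matrix.mul_assoc]
  have hnn : (0 : ℂ) ≤ sqf P w w := hP.dotProduct_mulVec_nonneg w
  have hnn2 : (0 : ℂ) ≤ star (Bᴴ *ᵥ v) ⬝ᵥ (Bᴴ *ᵥ v) := dotProduct_star_self_nonneg _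
  have hne0 : sqf P w w ≠ 0 := by
    intro h0
    have := (hP.dotProduct_mulVec_zero_iff w).1 h0
    exact hv0 (hw ▸ this)
  obtain ⟨p, hp⟩ : ∃ p : ℝ, sqf P w w = p := ⟨_, (Complex.eq_re_of_ofReal_le (r := 0) (by simpa using hnn))⟩
  obtain ⟨b, hb⟩ : ∃ b : ℝ, star (Bᴴ *ᵥ v) ⬝ᵥ (Bᴴ *ᵥ v) = b :=
    ⟨_, (Complex.eq_re_of_ofReal_le (r := 0) (by simpa using hnn2))⟩
  have hp0 : 0 < p := by
    have : 0 ≤ p := by rw [hp] at hnn; exact_mod_cast hnn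
    refine lt_of_le_of_ne this fun h => hne0 ?_
    rw [hp, ← h]; simp
  have hb0 : 0 ≤ b := by rw [hb] at hnn2; exact_mod_cast hnn2
  have hmain : ‖l‖ ^ 2 * p = p + b := by
    have e := c1.symm.trans c2
    rw [hp, hb, ← starRingEnd_apply, Complex.mul_conj, Complex.normSq_eq_norm_sq] at e
    exact_mod_cast e
  have hl1 := h1 l v hv0 hAv
  have hl2 : ‖l‖ ^ 2 ≤ 1 := pow_le_one₀ (norm_nonneg _) hl1
  have hbz : b = 0 := by nlinarith
  have hBv : Bᴴ *ᵥ v = 0 := by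
    rw [hbz] at hb
    exact dotProduct_star_self_eq_zero.1 (by simpa using hb)
  have := h2 l v hv0 hAv hBv
  have : ‖l‖ ^ 2 < 1 := pow_lt_one₀ (norm_nonneg _) this two_ne_zero
  nlinarith

end cplx

lemma gain_real {n m : ℕ} (A : Matrix (Fin n) (Fin n) ℝ) (B : Matrix (Fin n) (Fin m) ℝ)
    (P : Matrix (Fin n) (Fin n) ℝ) (hP : P.PosSemidef) :
    (1 + Bᵀ * P * B).det ≠ 0 ∧ (1 + Bᵀ * P * B) * gainK A B P = Bᵀ * P * A := by
  have hpd : (1 + Bᵀ * P * B).PosDef := by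
    have := hP.conjTranspose_mul_mul_same B
    rw [Matrix.conjTranspose_eq_transpose_of_trivial] at this
    exact Matrix.PosDef.one.add_posSemidef this
  have hu := (Matrix.isUnit_iff_isUnit_det _).1 hpd.isUnit
  refine ⟨hu.ne_zero, ?_⟩
  rw [gainK, ← Matrix.mul_assoc, Matrix.mul_nonsing_inv _ hu, Matrix.one_mul]

lemma dare_vec1 {𝕜 : Type*} [RCLike 𝕜] {n m : ℕ} (A : Matrix (Fin n) (Fin n) 𝕜)
    (B : Matrix (Fin n) (Fin m) 𝕜) (P : Matrix (Fin n) (Fin n) 𝕜) (K : Matrix (Fin m) (Fin n) 𝕜)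
    (hRK : (1 + Bᴴ * P * B) * K = Bᴴ * P * A) (v : Fin n → 𝕜) (u' : Fin m → 𝕜) :
    sqf P (B *ᵥ u') (A *ᵥ v) = star u' ⬝ᵥ (K *ᵥ v) + sqf P (B *ᵥ u') (B *ᵥ (K *ᵥ v)) := by
  unfold sqf
  rw [star_dot, star_dot, ← dotProduct_add]
  congr 1
  have := congrArg (fun M => M *ᵥ v) hRK
  simp only [Matrix.add_mul, Matrix.one_mul, Matrix.add_mulVec] at this
  simp only [Matrix.mulVec_mulVec, ← Matrix.mul_assoc]
  exact this.symm

lemma dare_vec2 {𝕜 : Type*} [RCLike 𝕜] {n m : ℕ} (A : Matrix (Fin n) (Fin n) 𝕜)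
    (B : Matrix (Fin n) (Fin m) 𝕜) (P : Matrix (Fin n) (Fin n) 𝕜) (K : Matrix (Fin m) (Fin n) 𝕜)
    (e : 𝕜) (hE : Aᴴ * P * A - P - Aᴴ * P * B * K + e • (1 : Matrix (Fin n) (Fin n) 𝕜) = 0)
    (v : Fin n → 𝕜) :
    sqf P (A *ᵥ v) (A *ᵥ v) = sqf P v v + sqf P (A *ᵥ v) (B *ᵥ (K *ᵥ v)) - e * (star v ⬝ᵥ v) := by
  unfold sqf
  rw [star_dot, star_dot]
  have := congrArg (fun M => star v ⬝ᵥ (M *ᵥ v)) hE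
  simp only [Matrix.add_mulVec, Matrix.sub_mulVec, Matrix.smul_mulVec, Matrix.one_mulVec,
    Matrix.zero_mulVec, dotProduct_add, dotProduct_sub, dotProduct_smul, dotProduct_zero,
    smul_eq_mul] at this
  simp only [Matrix.mulVec_mulVec, ← Matrix.mul_assoc]
  linear_combination this

lemma sqf_add {𝕜 : Type*} [RCLike 𝕜] {n : ℕ} (P : Matrix (Fin n) (Fin n) 𝕜) (x y z : Fin n → 𝕜) :
    sqf P (x + y) z = sqf P x z + sqf P y z := by
  simp [sqf, add_dotProduct]
lemma sqf_sub {𝕜 : Type*} [RCLike 𝕜] {n : ℕ} (P : Matrix (Fin n) (Fin n) 𝕜) (x y z : Fin n → 𝕜) :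
    sqf P (x - y) z = sqf P x z - sqf P y z := by
  simp [sqf, sub_dotProduct]
lemma sqf_sub' {𝕜 : Type*} [RCLike 𝕜] {n : ℕ} (P : Matrix (Fin n) (Fin n) 𝕜) (x y z : Fin n → 𝕜) :
    sqf P z (x - y) = sqf P z x - sqf P z y := by
  simp [sqf, dotProduct_sub, Matrix.mulVec_sub]
lemma sqf_smul {𝕜 : Type*} [RCLike 𝕜] {n : ℕ} (P : Matrix (Fin n) (Fin n) 𝕜) (c : 𝕜)
    (x z : Fin n → 𝕜) : sqf P (c • x) z = star c * sqf P x z := by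
  simp [sqf, smul_dotProduct]
lemma sqf_smul' {𝕜 : Type*} [RCLike 𝕜] {n : ℕ} (P : Matrix (Fin n) (Fin n) 𝕜) (c : 𝕜)
    (x z : Fin n → 𝕜) : sqf P z (c • x) = c * sqf P z x := by
  simp [sqf, dotProduct_smul, Matrix.mulVec_smul]

lemma dare_E {n m : ℕ} {A : Matrix (Fin n) (Fin n) ℝ} {B : Matrix (Fin n) (Fin m) ℝ} {ε : ℝ}
    {P : Matrix (Fin n) (Fin n) ℝ} (h : IsDARESol A B ε P) :
    Aᵀ * P * A - P - Aᵀ * P * B * gainK A B P + ε • (1 : Matrix (Fin n) (Fin n) ℝ) = 0 := by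
  have := h.2
  rw [Matrix.mul_assoc (Aᵀ * P * B)] at this
  exact this

/-- dynamic-programming inequality -/
lemma dp_ineq {n m : ℕ} (A : Matrix (Fin n) (Fin n) ℝ) (B : Matrix (Fin n) (Fin m) ℝ) (ε : ℝ)
    (P : Matrix (Fin n) (Fin n) ℝ) (h : IsDARESol A B ε P) (x : Fin n → ℝ) (u' : Fin m → ℝ) :
    sqf P x x ≤ sqf P (A *ᵥ x - B *ᵥ u') (A *ᵥ x - B *ᵥ u') + ε * (x ⬝ᵥ x) + u' ⬝ᵥ u' := by
  have hps := h.1.posSemidef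
  have hPh : Pᴴ = P := hps.isHermitian
  have hRK := (gain_real A B P hps).2
  have hE := dare_E h
  simp only [← Matrix.conjTranspose_eq_transpose_of_trivial] at hRK hE
  set u := gainK A B P *ᵥ x with hu
  have e1 := dare_vec1 A B P _ hRK x u'
  have e2 := dare_vec1 A B P _ hRK x u
  have e3 := dare_vec2 A B P _ ε hE x
  rw [← hu] at e1 e2 e3
  have s1 := sqf_conj P hPh (A *ᵥ x) (B *ᵥ u')
  have s2 := sqf_conj P hPh (A *ᵥ x) (B *ᵥ u)
  have s3 := sqf_conj P hPh (B *ᵥ u) (B *ᵥ u')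
  have p1 : 0 ≤ sqf P (B *ᵥ u - B *ᵥ u') (B *ᵥ u - B *ᵥ u') := hps.dotProduct_mulVec_nonneg _
  have p2 : 0 ≤ (u - u') ⬝ᵥ (u - u') := by
    simpa using dotProduct_star_self_nonneg (u - u')
  simp only [star_trivial] at *
  simp only [sub_dotProduct, dotProduct_sub] at p2
  rw [dotProduct_comm u u'] at p2
  simp only [sqf_sub, sqf_sub'] at *
  linarith

lemma summable_sq_of_geo (f : ℕ → ℝ) (D r : ℝ) (hr0 : 0 < r) (hr : r < 1)
    (h : ∀ j, |f j| ≤ D * r ^ j) : Summable fun j => f j * f j := by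
  have hg : Summable fun j : ℕ => D ^ 2 * (r ^ 2) ^ j :=
    (summable_geometric_of_lt_one (by positivity) (by nlinarith)).mul_left _
  refine Summable.of_nonneg_of_le (fun j => mul_self_nonneg _) (fun j => ?_) hg
  have h1 := h j
  have h2 := mul_self_le_mul_self (abs_nonneg _) h1
  rw [abs_mul_abs_self] at h2
  calc _ ≤ _ := h2
    _ = _ := by ring

lemma P_bdd {n m : ℕ} (A : Matrix (Fin n) (Fin n) ℝ) (B : Matrix (Fin n) (Fin m) ℝ)
    (hstab : Stabilizable A B) (x : Fin n → ℝ) :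
    ∃ c : ℝ, ∀ ε P, 0 < ε → ε ≤ 1 → IsDARESol A B ε P → sqf P x x ≤ c := by
  obtain ⟨K, hK⟩ := hstab
  obtain ⟨c, r, hc, hr0, hr, hM⟩ := growth_real (A - B * K) 1 one_pos hK
  let X : ℕ → Fin n → ℝ := fun j => ((A - B * K) ^ j) *ᵥ x
  have hX : ∀ j, X (j + 1) = A *ᵥ X j - B *ᵥ (K *ᵥ X j) := by
    intro j
    show ((A - B * K) ^ (j + 1)) *ᵥ x = _
    rw [pow_succ', ← Matrix.mulVec_mulVec, Matrix.sub_mulVec, ← Matrix.mulVec_mulVec]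
  have hXb : ∀ i j, |X j i| ≤ (c * ∑ l, |x l|) * r ^ j := by
    intro i j
    show |∑ l, ((A - B * K) ^ j) i l * x l| ≤ _
    refine (Finset.abs_sum_le_sum_abs _ _).trans ?_
    rw [Finset.mul_sum, Finset.sum_mul]
    refine Finset.sum_le_sum fun l _ => ?_
    rw [abs_mul]
    have := mul_le_mul_of_nonneg_right (hM j i l) (abs_nonneg (x l))
    rw [Real.norm_eq_abs] at this
    linarith
  have hKb : ∀ i j, |(K *ᵥ X j) i| ≤ (∑ l', |K i l'| * (c * ∑ l, |x l|)) * r ^ j := by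
    intro i j
    show |∑ l, K i l * X j l| ≤ _
    refine (Finset.abs_sum_le_sum_abs _ _).trans ?_
    rw [Finset.sum_mul]
    refine Finset.sum_le_sum fun l _ => ?_
    rw [abs_mul, mul_assoc]
    exact mul_le_mul_of_nonneg_left (hXb l j) (abs_nonneg _)
  have hs1 : Summable fun j => X j ⬝ᵥ X j :=
    summable_sum fun i _ => summable_sq_of_geo (fun j => X j i) _ r hr0 hr (hXb i)
  have hs2 : Summable fun j => (K *ᵥ X j) ⬝ᵥ (K *ᵥ X j) :=
    summable_sum fun i _ => summable_sq_of_geo (fun j => (K *ᵥ X j) i) _ r hr0 hr (hKb i)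
  have hs := hs1.add hs2
  have hX0 : Tendsto X atTop (𝓝 0) := by
    refine iss (A - B * K) c r hc hr0 hr hM X (fun _ => 0) (fun k => ?_) tendsto_const_nhds
    rw [hX, Matrix.sub_mulVec, ← Matrix.mulVec_mulVec, add_zero]
  have hnn : ∀ (k : ℕ) (y : Fin k → ℝ), 0 ≤ y ⬝ᵥ y := fun k y => by
    simpa using dotProduct_star_self_nonneg y
  refine ⟨∑' j, (X j ⬝ᵥ X j + (K *ᵥ X j) ⬝ᵥ (K *ᵥ X j)), fun ε P hε hε1 h => ?_⟩
  have hstep : ∀ k, sqf P x x ≤ sqf P (X k) (X k)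
      + ∑ j ∈ Finset.range k, (X j ⬝ᵥ X j + (K *ᵥ X j) ⬝ᵥ (K *ᵥ X j)) := by
    intro k
    induction k with
    | zero => simp [X]
    | succ k ih =>
      rw [Finset.sum_range_succ]
      have h1 := dp_ineq A B ε P h (X k) (K *ᵥ X k)
      rw [← hX] at h1
      have h2 := hnn _ (X k)
      nlinarith
  have hlim : Tendsto (fun k => sqf P (X k) (X k)) atTop (𝓝 0) := by
    have hcont : Continuous fun y : Fin n → ℝ => sqf P y y := by
      unfold sqf
      simp only [star_trivial]
      fun_prop
    have := (hcont.tendsto 0).comp hX0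
    simpa [sqf, Function.comp_def] using this
  have hb : ∀ k, sqf P x x ≤ sqf P (X k) (X k)
      + ∑' j, (X j ⬝ᵥ X j + (K *ᵥ X j) ⬝ᵥ (K *ᵥ X j)) := fun k =>
    (hstep k).trans (by
      gcongr
      exact hs.sum_le_tsum _ (fun j _ => add_nonneg (hnn _ _) (hnn _ _)))
  have := ge_of_tendsto' (hlim.add_const (∑' j, (X j ⬝ᵥ X j + (K *ᵥ X j) ⬝ᵥ (K *ᵥ X j)))) hb
  simpa using this

lemma ofReal_map_mul {a b c : ℕ} (M : Matrix (Fin a) (Fin b) ℝ) (N : Matrix (Fin b) (Fin c) ℝ) :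
    (M * N).map Complex.ofReal = M.map Complex.ofReal * N.map Complex.ofReal :=
  Matrix.map_mul (f := Complex.ofRealHom)

lemma ofReal_map_transpose {a b : ℕ} (M : Matrix (Fin a) (Fin b) ℝ) :
    (Mᵀ).map Complex.ofReal = (M.map Complex.ofReal)ᴴ := by
  ext i j
  simp [Matrix.conjTranspose_apply]

lemma ofReal_map_sub {a b : ℕ} (M N : Matrix (Fin a) (Fin b) ℝ) :
    (M - N).map Complex.ofReal = M.map Complex.ofReal - N.map Complex.ofReal := by
  ext i j; simp
lemma ofReal_map_add {a b : ℕ} (M N : Matrix (Fin a) (Fin b) ℝ) :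
    (M + N).map Complex.ofReal = M.map Complex.ofReal + N.map Complex.ofReal := by
  ext i j; simp
lemma ofReal_map_smul {a b : ℕ} (c : ℝ) (M : Matrix (Fin a) (Fin b) ℝ) :
    (c • M).map Complex.ofReal = (c : ℂ) • M.map Complex.ofReal := by
  ext i j; simp
lemma ofReal_map_one {a : ℕ} :
    (1 : Matrix (Fin a) (Fin a) ℝ).map Complex.ofReal = 1 :=
  Matrix.map_one _ Complex.ofReal_zero Complex.ofReal_one
lemma ofReal_map_zero {a b : ℕ} :
    (0 : Matrix (Fin a) (Fin b) ℝ).map Complex.ofReal = 0 :=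
  Matrix.map_zero _ Complex.ofReal_zero

section cplx2
open scoped ComplexOrder MatrixOrder

lemma psd_map {n : ℕ} (P : Matrix (Fin n) (Fin n) ℝ) (hP : P.PosSemidef) :
    (P.map Complex.ofReal).PosSemidef := by
  obtain ⟨S, hS⟩ := CStarAlgebra.nonneg_iff_eq_star_mul_self.1 hP.nonneg
  rw [hS]
  have : (star S * S).map Complex.ofReal = (S.map Complex.ofReal)ᴴ * S.map Complex.ofReal := by
    rw [ofReal_map_mul, ← ofReal_map_transpose]
    rfl
  rw [this]
  exact Matrix.posSemidef_conjTranspose_mul_self _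

lemma spec_transpose {n : ℕ} (A : Matrix (Fin n) (Fin n) ℝ) (l : ℂ) (v : Fin n → ℂ) (hv : v ≠ 0)
    (h : (A.map Complex.ofReal)ᴴ *ᵥ v = l • v) : l ∈ spectrum ℂ (A.map Complex.ofReal) := by
  have h1 : l ∈ spectrum ℂ (A.map Complex.ofReal)ᴴ := (mem_spec_iff_vec _ _).2 ⟨v, hv, h⟩
  rw [mem_spec_iff_det] at h1 ⊢
  have h2 : (A.map Complex.ofReal)ᴴ = (A.map Complex.ofReal)ᵀ := by
    ext i j; simp [Matrix.conjTranspose_apply]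
  rw [h2, ← Matrix.det_transpose] at h1
  simpa using h1

lemma P_lim_zero {n m : ℕ} (A : Matrix (Fin n) (Fin n) ℝ) (B : Matrix (Fin n) (Fin m) ℝ)
    (hstab : Stabilizable A B) (hA : EigInClosedUnitDisc A)
    (P : Matrix (Fin n) (Fin n) ℝ) (hP : P.PosSemidef)
    (hE : Aᵀ * P * A - P - Aᵀ * P * B * gainK A B P = 0) : P = 0 := by
  have hRK := (gain_real A B P hP).2
  have hRK' := congrArg (fun M => M.map Complex.ofReal) hRK
  have hE' := congrArg (fun M => M.map Complex.ofReal) hE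
  simp only [ofReal_map_mul, ofReal_map_transpose, ofReal_map_sub, ofReal_map_add, ofReal_map_one,
    ofReal_map_zero] at hRK' hE'
  have := pbh_zero _ _ _ (psd_map P hP) _ hRK' hE'
    (fun l v hv h => hA l (spec_transpose A l v hv h)) (by
      intro l v hv h hB
      obtain ⟨K, hK⟩ := hstab
      apply hK l
      apply spec_transpose _ l v hv
      rw [ofReal_map_sub, ofReal_map_mul, Matrix.conjTranspose_sub, Matrix.conjTranspose_mul,
        Matrix.sub_mulVec, h, ← Matrix.mulVec_mulVec, hB, Matrix.mulVec_zero, sub_zero])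
  ext i j
  have h1 := congrFun (congrFun this i) j
  simpa using h1

/-- no eigenvalue outside the disc, with complex gain `s` -/
lemma lyap {n m : ℕ} (A : Matrix (Fin n) (Fin n) ℝ) (B : Matrix (Fin n) (Fin m) ℝ) (ε : ℝ)
    (hε : 0 < ε) (P : Matrix (Fin n) (Fin n) ℝ) (h : IsDARESol A B ε P) (ρ : ℝ)
    (hsmall : ∀ u : Fin m → ℂ, ρ ^ 2 * (star u ⬝ᵥ
      (((Bᵀ * P * B).map Complex.ofReal) *ᵥ u)).re ≤ 1 / 2 * (star u ⬝ᵥ u).re)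
    (s z : ℂ) (hs : 3 / 4 ≤ s.re) (hs2 : ‖s‖ ≤ ρ) (hz : 1 ≤ ‖z‖) (v : Fin n → ℂ) (hv : v ≠ 0)
    (heq : z • v = A.map Complex.ofReal *ᵥ v
      - s • (((B * gainK A B P).map Complex.ofReal) *ᵥ v)) : False := by
  have hps := h.1.posSemidef
  have hpc := psd_map P hps
  have hPh := hpc.isHermitian
  have hRK := (gain_real A B P hps).2
  have hE := dare_E h
  have hRK' := congrArg (fun M => M.map Complex.ofReal) hRK
  have hE' := congrArg (fun M => M.map Complex.ofReal) hE
  simp only [ofReal_map_mul, ofReal_map_transpose, ofReal_map_sub, ofReal_map_add, ofReal_map_one,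
    ofReal_map_zero, ofReal_map_smul] at hRK' hE'
  simp only [ofReal_map_mul, ofReal_map_transpose] at hsmall
  rw [ofReal_map_mul, ← Matrix.mulVec_mulVec] at heq
  set Ac := A.map Complex.ofReal
  set Bc := B.map Complex.ofReal
  set Pc := P.map Complex.ofReal
  set u := (gainK A B P).map Complex.ofReal *ᵥ v with hu
  have e2 := dare_vec1 Ac Bc Pc _ hRK' v u
  have e3 := dare_vec2 Ac Bc Pc _ (ε : ℂ) hE' v
  rw [← hu] at e2 e3
  clear_value u
  have hsu := hsmall u
  have hb1 : star u ⬝ᵥ ((Bcᴴ * Pc * Bc) *ᵥ u) = sqf Pc (Bc *ᵥ u) (Bc *ᵥ u) := by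
    unfold sqf
    rw [star_dot, Matrix.mulVec_mulVec, Matrix.mulVec_mulVec]
  rw [hb1] at hsu
  have s2 := sqf_conj Pc hPh (Bc *ᵥ u) (Ac *ᵥ v)
  have key := congrArg (fun y => sqf Pc y y) heq
  simp only [sqf_sub, sqf_sub', sqf_smul, sqf_smul'] at key
  have hreal : ∀ c : ℂ, 0 ≤ c → ∃ p : ℝ, 0 ≤ p ∧ c = p := fun c hc =>
    ⟨c.re, (Complex.nonneg_iff.1 hc).1, Complex.ext rfl (by simp [(Complex.nonneg_iff.1 hc).2.symm])⟩
  obtain ⟨p, hp0, hp⟩ := hreal _ (hpc.dotProduct_mulVec_nonneg v)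
  obtain ⟨β, hβ0, hβ⟩ := hreal _ (hpc.dotProduct_mulVec_nonneg (Bc *ᵥ u))
  obtain ⟨μ, hμ0, hμ⟩ := hreal _ (dotProduct_star_self_nonneg u)
  obtain ⟨w, hw0, hw⟩ := hreal _ (dotProduct_star_self_nonneg v)
  change sqf Pc v v = p at hp
  change sqf Pc _ _ = β at hβ
  have hwpos : 0 < w := by
    refine lt_of_le_of_ne hw0 fun h0 => hv ?_
    rw [← h0] at hw
    exact dotProduct_star_self_eq_zero.1 (by simpa using hw)
  rw [hμ, hβ] at e2
  rw [hβ, hμ, Complex.ofReal_re, Complex.ofReal_re] at hsu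
  rw [e2] at s2
  rw [e3, e2, ← s2, hp, hβ, hw] at key
  have key' := congrArg Complex.re key
  have hz2 : 1 ≤ ‖z‖ ^ 2 := one_le_pow₀ hz
  have hs3 : ‖s‖ ^ 2 ≤ ρ ^ 2 := pow_le_pow_left₀ (norm_nonneg _) hs2 2
  rw [← Complex.normSq_eq_norm_sq, Complex.normSq_apply] at hz2 hs3
  simp only [RCLike.star_def, Complex.mul_re, Complex.mul_im, Complex.sub_re, Complex.sub_im,
    Complex.add_re, Complex.add_im,
    Complex.conj_re, Complex.conj_im, Complex.ofReal_re, Complex.ofReal_im, map_add,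
    Complex.conj_ofReal] at key'
  have k1 : (z.re * z.re + z.im * z.im) * p = p - ε * w - (2 * s.re - 1) * (μ + β)
      + (s.re * s.re + s.im * s.im) * β := by linarith
  have k2 : p ≤ (z.re * z.re + z.im * z.im) * p := by nlinarith
  have k3 : (s.re * s.re + s.im * s.im) * β ≤ ρ ^ 2 * β := mul_le_mul_of_nonneg_right hs3 hβ0
  have k4 : 1 / 2 * (μ + β) ≤ (2 * s.re - 1) * (μ + β) :=
    mul_le_mul_of_nonneg_right (by linarith) (by linarith)
  have k5 : 0 < ε * w := mul_pos hε hwpos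
  linarith

end cplx2

lemma psd_entry_bound {n : ℕ} (P : Matrix (Fin n) (Fin n) ℝ) (hP : P.PosSemidef) (i j : Fin n) :
    |P i j| ≤ P i i + P j j := by
  have hs : P j i = P i j := by
    have := congrFun (congrFun hP.isHermitian i) j
    simpa [Matrix.conjTranspose_apply] using this
  have h1 : 0 ≤ sqf P (Pi.single i 1 + Pi.single j 1) (Pi.single i 1 + Pi.single j 1) :=
    hP.dotProduct_mulVec_nonneg _
  have h2 : 0 ≤ sqf P (Pi.single i 1 - Pi.single j 1) (Pi.single i 1 - Pi.single j 1) :=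
    hP.dotProduct_mulVec_nonneg _
  simp [sqf, Matrix.mulVec_add, Matrix.mulVec_sub, add_dotProduct, sub_dotProduct, hs] at h1 h2
  have h3 := hP.diag_nonneg (i := i)
  have h4 := hP.diag_nonneg (i := j)
  rw [abs_le]
  constructor <;> linarith

lemma gainK_continuousAt {n m : ℕ} (A : Matrix (Fin n) (Fin n) ℝ) (B : Matrix (Fin n) (Fin m) ℝ)
    (P : Matrix (Fin n) (Fin n) ℝ) (hd : (1 + Bᵀ * P * B).det ≠ 0) :
    ContinuousAt (gainK A B) P := by
  have c1 : Continuous fun P : Matrix (Fin n) (Fin n) ℝ => 1 + Bᵀ * P * B := by fun_prop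
  have c2 : ContinuousAt (fun P : Matrix (Fin n) (Fin n) ℝ => (1 + Bᵀ * P * B)⁻¹) P := by
    simp only [Matrix.inv_def, Ring.inverse_eq_inv']
    exact (c1.matrix_det.continuousAt.inv₀ hd).smul c1.matrix_adjugate.continuousAt
  have c3 : Continuous fun P : Matrix (Fin n) (Fin n) ℝ => Bᵀ * P * A := by fun_prop
  unfold gainK
  have c4 : Continuous fun p : Matrix (Fin m) (Fin m) ℝ × Matrix (Fin m) (Fin n) ℝ => p.1 * p.2 := by
    fun_prop
  exact c4.continuousAt.comp (c2.prodMk c3.continuousAt)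

lemma P_tendsto {n m : ℕ} (A : Matrix (Fin n) (Fin n) ℝ) (B : Matrix (Fin n) (Fin m) ℝ)
    (hstab : Stabilizable A B) (hA : EigInClosedUnitDisc A)
    (P : ℝ → Matrix (Fin n) (Fin n) ℝ) (hP : ∀ ε > (0 : ℝ), IsDARESol A B ε (P ε)) :
    Tendsto P (𝓝[>] 0) (𝓝 0) := by
  choose c hc using fun i : Fin n => P_bdd A B hstab (Pi.single i 1)
  let S : Set (Matrix (Fin n) (Fin n) ℝ) :=
    Set.univ.pi fun i => Set.univ.pi fun j => Set.Icc (-(c i + c j)) (c i + c j)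
  have hS : IsCompact S :=
    isCompact_univ_pi fun i => isCompact_univ_pi fun j => isCompact_Icc
  have hpos : ∀ᶠ ε : ℝ in 𝓝[>] 0, 0 < ε := eventually_mem_nhdsWithin
  have hle1 : ∀ᶠ ε : ℝ in 𝓝[>] 0, ε ≤ 1 :=
    nhdsWithin_le_nhds (eventually_le_nhds one_pos)
  refine hS.tendsto_nhds_of_unique_mapClusterPt ?_ ?_
  · filter_upwards [hpos, hle1] with ε h0 h1 i _ j _
    have hd : ∀ i, P ε i i ≤ c i := fun i => by
      have := hc i ε (P ε) h0 h1 (hP ε h0)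
      simpa [sqf] using this
    have := psd_entry_bound _ (hP ε h0).1.posSemidef i j
    have h2 := abs_le.1 (this.trans (add_le_add (hd i) (hd j)))
    exact h2
  · intro P0 _ hcl
    obtain ⟨U, hU, hUt⟩ := mapClusterPt_iff_ultrafilter.1 hcl
    have hpsd : P0.PosSemidef := by
      refine Matrix.PosSemidef.of_dotProduct_mulVec_nonneg ?_ ?_
      · have h1 : Tendsto (fun ε => (P ε)ᴴ) U (𝓝 P0ᴴ) :=
          ((continuous_id.matrix_conjTranspose).tendsto P0).comp hUt
        have h2 : (fun ε => (P ε)ᴴ) =ᶠ[U] P := by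
          filter_upwards [hU hpos] with ε h0
          exact (hP ε h0).1.isHermitian
        exact tendsto_nhds_unique (h1.congr' h2) hUt
      · intro x
        have hcx : Continuous fun Q : Matrix (Fin n) (Fin n) ℝ => star x ⬝ᵥ (Q *ᵥ x) := by fun_prop
        refine ge_of_tendsto ((hcx.tendsto P0).comp hUt) ?_
        filter_upwards [hU hpos] with ε h0
        exact (hP ε h0).1.posSemidef.dotProduct_mulVec_nonneg x
    apply P_lim_zero A B hstab hA P0 hpsd
    have hg := (gainK_continuousAt A B P0 (gain_real A B P0 hpsd).1).tendsto.comp hUt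
    have c4 : Continuous fun p : Matrix (Fin n) (Fin n) ℝ × Matrix (Fin m) (Fin n) ℝ =>
        Aᵀ * p.1 * A - p.1 - Aᵀ * p.1 * B * p.2 := by fun_prop
    have h1 := (c4.tendsto (P0, gainK A B P0)).comp (hUt.prodMk_nhds hg)
    have hid : Tendsto (fun ε : ℝ => ε) U (𝓝 0) :=
      tendsto_id.mono_left (hU.trans nhdsWithin_le_nhds)
    have h2 : Tendsto (fun ε : ℝ => -(ε • (1 : Matrix (Fin n) (Fin n) ℝ))) U (𝓝 0) := by
      have := (hid.smul_const (1 : Matrix (Fin n) (Fin n) ℝ)).neg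
      simpa using this
    refine tendsto_nhds_unique h1 (h2.congr' ?_)
    filter_upwards [hU hpos] with ε h0
    have := dare_E (hP ε h0)
    exact (eq_neg_of_add_eq_zero_left this).symm

lemma quad_small (m : ℕ) (ρ : ℝ) :
    ∀ᶠ M : Matrix (Fin m) (Fin m) ℝ in 𝓝 0, ∀ u : Fin m → ℂ, ρ ^ 2 * (star u ⬝ᵥ
      ((M.map Complex.ofReal) *ᵥ u)).re ≤ 1 / 2 * (star u ⬝ᵥ u).re := by
  have hcont : Continuous fun M : Matrix (Fin m) (Fin m) ℝ => ∑ i, ∑ j, |M i j| := by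
    refine continuous_finsetSum _ fun i _ => continuous_finsetSum _ fun j _ => ?_
    exact (continuous_apply_apply i j).abs
  have hev : ∀ᶠ M : Matrix (Fin m) (Fin m) ℝ in 𝓝 0,
      ρ ^ 2 * ∑ i, ∑ j, |M i j| < 1 / 2 := by
    refine (continuous_const.mul hcont).continuousAt.eventually_lt_const ?_
    simp
  filter_upwards [hev] with M hM u
  have hu : (star u ⬝ᵥ u).re = ∑ i, ‖u i‖ ^ 2 := by
    rw [dotProduct, Complex.re_sum]
    refine Finset.sum_congr rfl fun i _ => ?_
    rw [Pi.star_apply, RCLike.star_def, ← Complex.normSq_eq_conj_mul_self, Complex.ofReal_re,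
      Complex.normSq_eq_norm_sq]
  have hle : ∀ i, ‖u i‖ ^ 2 ≤ ∑ i, ‖u i‖ ^ 2 := fun i =>
    Finset.single_le_sum (f := fun i => ‖u i‖ ^ 2) (fun _ _ => by positivity) (Finset.mem_univ i)
  have h1 : (star u ⬝ᵥ ((M.map Complex.ofReal) *ᵥ u)).re
      ≤ (∑ i, ∑ j, |M i j|) * ∑ i, ‖u i‖ ^ 2 := by
    refine (Complex.re_le_norm _).trans ?_
    rw [dotProduct]
    refine (norm_sum_le _ _).trans ?_
    rw [Finset.sum_mul]
    refine Finset.sum_le_sum fun i _ => ?_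
    rw [norm_mul, Pi.star_apply, norm_star, Matrix.mulVec, dotProduct, Finset.sum_mul]
    refine (mul_le_mul_of_nonneg_left (norm_sum_le _ _) (norm_nonneg _)).trans ?_
    rw [Finset.mul_sum]
    refine Finset.sum_le_sum fun j _ => ?_
    rw [norm_mul, Matrix.map_apply, Complex.norm_real, Real.norm_eq_abs]
    have h2 : ‖u i‖ * ‖u j‖ ≤ ∑ i, ‖u i‖ ^ 2 := by
      nlinarith [hle i, hle j, sq_nonneg (‖u i‖ - ‖u j‖)]
    calc _ = |M i j| * (‖u i‖ * ‖u j‖) := by ring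
      _ ≤ _ := mul_le_mul_of_nonneg_left h2 (abs_nonneg _)
  rw [hu]
  have h0 : 0 ≤ ∑ i, ‖u i‖ ^ 2 := by positivity
  calc _ ≤ ρ ^ 2 * ((∑ i, ∑ j, |M i j|) * ∑ i, ‖u i‖ ^ 2) :=
        mul_le_mul_of_nonneg_left h1 (sq_nonneg _)
    _ = (ρ ^ 2 * (∑ i, ∑ j, |M i j|)) * ∑ i, ‖u i‖ ^ 2 := by ring
    _ ≤ _ := mul_le_mul_of_nonneg_right hM.le h0

lemma omegaMax_nonneg {n : ℕ} (A : Matrix (Fin n) (Fin n) ℝ) : 0 ≤ omegaMax A := by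
  unfold omegaMax
  split_ifs
  · exact le_refl _
  · exact Real.sSup_nonneg fun x hx => hx.1.1

lemma le_omegaMax {n : ℕ} (A : Matrix (Fin n) (Fin n) ℝ) (ω : ℝ) (h : ω ∈ Set.Icc 0 Real.pi)
    (hd : (Complex.exp (ω * Complex.I) • (1 : Matrix (Fin n) (Fin n) ℂ)
      - A.map Complex.ofReal).det = 0) : ω ≤ omegaMax A := by
  have hns : ¬ SchurStable A := by
    intro hS
    have := hS _ ((mem_spec_iff_det _ _).2 hd)
    rw [Complex.norm_exp_ofReal_mul_I] at this
    exact lt_irrefl _ this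
  unfold omegaMax
  rw [if_neg hns]
  exact le_csSup ⟨Real.pi, fun x hx => hx.1.2⟩ ⟨h, hd⟩

/-- at a unit-circle eigenvalue the delay rotates by less than a right angle -/
lemma cos_bound {n : ℕ} (A : Matrix (Fin n) (Fin n) ℝ) (κbar : ℕ)
    (hκbar : (κbar : ℝ) * omegaMax A < Real.pi / 2) (z : ℂ) (hz : ‖z‖ = 1)
    (hd : (z • (1 : Matrix (Fin n) (Fin n) ℂ) - A.map Complex.ofReal).det = 0)
    (κ : ℕ) (hκ : κ ≤ κbar) : Real.cos (κbar * omegaMax A) ≤ (z ^ κ).re := by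
  have hz' : z = Complex.exp (z.arg * Complex.I) := by
    have := Complex.norm_mul_exp_arg_mul_I z
    rw [hz] at this
    simpa using this.symm
  have hre : (z ^ κ).re = Real.cos (κ * |z.arg|) := by
    conv_lhs => rw [hz', ← Complex.exp_nat_mul]
    have : (κ : ℂ) * (z.arg * Complex.I) = ((κ * z.arg : ℝ) : ℂ) * Complex.I := by push_cast; ring
    rw [this, Complex.exp_ofReal_mul_I_re, ← Real.cos_abs, abs_mul, Nat.abs_cast]
  have harg : |z.arg| ≤ omegaMax A := by
    apply le_omegaMax A _ ⟨abs_nonneg _, Complex.abs_arg_le_pi z⟩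
    rcases abs_choice z.arg with h | h
    · rw [h, ← hz']; exact hd
    · rw [h]
      have hc : Complex.exp (((-z.arg : ℝ) : ℂ) * Complex.I) = (starRingEnd ℂ) z := by
        conv_rhs => rw [hz']
        rw [← Complex.exp_conj]
        simp
      rw [hc]
      have h3 := congrArg (starRingEnd ℂ) hd
      rw [RingHom.map_det, map_zero] at h3
      rw [← h3]
      congr 1
      ext i j
      by_cases hij : i = j <;> simp [hij]
  rw [hre]
  have hκ' : (κ : ℝ) ≤ κbar := by exact_mod_cast hκ
  have h0 : (κ : ℝ) * |z.arg| ≤ κbar * omegaMax A :=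
    mul_le_mul hκ' harg (abs_nonneg _) (by positivity)
  exact Real.cos_le_cos_of_nonneg_of_le_pi (by positivity) (by linarith [Real.pi_pos]) h0

lemma unif_nonsing {n : ℕ} (A : Matrix (Fin n) (Fin n) ℝ) (κbar : ℕ)
    (hκbar : (κbar : ℝ) * omegaMax A < Real.pi / 2) (ρ : ℝ) (hρ : 0 < ρ)
    (hρ1 : ρ * Real.cos (κbar * omegaMax A) = 1) :
    ∀ᶠ E : Matrix (Fin n) (Fin n) ℂ in 𝓝 0, ∀ κ ∈ Set.Iic κbar, ∀ p ∈
      ({z : ℂ | ‖z‖ = 1 ∧ ρ * (z ^ κ).re ≤ 3 / 4} ×ˢ Metric.closedBall (0 : ℂ) ρ),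
      (p.1 • (1 : Matrix (Fin n) (Fin n) ℂ) - A.map Complex.ofReal + p.2 • E).det ≠ 0 := by
  rw [Filter.eventually_all_finite (Set.finite_Iic κbar)]
  intro κ hκ
  have hK : IsCompact {z : ℂ | ‖z‖ = 1 ∧ ρ * (z ^ κ).re ≤ 3 / 4} := by
    have h1 : IsClosed {z : ℂ | ‖z‖ = 1 ∧ ρ * (z ^ κ).re ≤ 3 / 4} := by
      apply IsClosed.inter
      · exact isClosed_eq continuous_norm continuous_const
      · exact isClosed_le (continuous_const.mul (Complex.continuous_re.comp (continuous_pow κ)))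
          continuous_const
    refine (isCompact_closedBall (0 : ℂ) 1).of_isClosed_subset h1 ?_
    intro z hz
    simp [hz.1]
  apply IsCompact.eventually_forall_of_forall_eventually
    (hK.prod (isCompact_closedBall (0 : ℂ) ρ))
  rintro ⟨z, s⟩ ⟨⟨hz, hz2⟩, hs⟩
  have hc : Continuous fun q : Matrix (Fin n) (Fin n) ℂ × (ℂ × ℂ) =>
      (q.2.1 • (1 : Matrix (Fin n) (Fin n) ℂ) - A.map Complex.ofReal + q.2.2 • q.1).det := by
    apply Continuous.matrix_det
    fun_prop
  refine hc.continuousAt.eventually_ne ?_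
  simp only [smul_zero, add_zero]
  intro hd
  have h1 := cos_bound A κbar hκbar z hz hd κ hκ
  have h2 := mul_le_mul_of_nonneg_left h1 hρ.le
  simp only at hz2
  linarith

lemma eps_exists {n m : ℕ} (A : Matrix (Fin n) (Fin n) ℝ) (B : Matrix (Fin n) (Fin m) ℝ)
    (hstab : Stabilizable A B) (hA : EigInClosedUnitDisc A) (κbar : ℕ)
    (hκbar : (κbar : ℝ) * omegaMax A < Real.pi / 2)
    (P : ℝ → Matrix (Fin n) (Fin n) ℝ) (hP : ∀ ε > (0 : ℝ), IsDARESol A B ε (P ε))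
    (ρ : ℝ) (hρ : 0 < ρ) (hρ1 : ρ * Real.cos (κbar * omegaMax A) = 1) :
    ∃ εstar > (0 : ℝ), ∀ ε ∈ Set.Ioc (0 : ℝ) εstar,
      (∀ u : Fin m → ℂ, ρ ^ 2 * (star u ⬝ᵥ
        (((Bᵀ * P ε * B).map Complex.ofReal) *ᵥ u)).re ≤ 1 / 2 * (star u ⬝ᵥ u).re) ∧
      ∀ κ ≤ κbar, ∀ z s : ℂ, ‖z‖ = 1 → ρ * (z ^ κ).re ≤ 3 / 4 → ‖s‖ ≤ ρ →
        (z • (1 : Matrix (Fin n) (Fin n) ℂ) - A.map Complex.ofReal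
          + s • (B * gainK A B (P ε)).map Complex.ofReal).det ≠ 0 := by
  have hT := P_tendsto A B hstab hA P hP
  have c1 : Continuous fun Q : Matrix (Fin n) (Fin n) ℝ => Bᵀ * Q * B := by fun_prop
  have t1 : Tendsto (fun ε => Bᵀ * P ε * B) (𝓝[>] 0) (𝓝 0) := by
    have := (c1.tendsto 0).comp hT
    simpa [Function.comp_def] using this
  have g0 := gainK_continuousAt A B 0 (by simp)
  have c2 : Continuous fun K : Matrix (Fin m) (Fin n) ℝ => (B * K).map Complex.ofReal := by
    exact (continuous_const.matrix_mul continuous_id).matrix_map Complex.continuous_ofReal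
  have t2 : Tendsto (fun ε => (B * gainK A B (P ε)).map Complex.ofReal) (𝓝[>] 0) (𝓝 0) := by
    have := (c2.tendsto (gainK A B 0)).comp (g0.tendsto.comp hT)
    have hz : gainK A B 0 = 0 := by simp [gainK]
    have hz2 : (0 : Matrix (Fin n) (Fin n) ℝ).map Complex.ofReal = 0 := by ext i j; simp
    rw [hz, Matrix.mul_zero, hz2] at this
    exact this
  have ev := (t1.eventually (quad_small m ρ)).and (t2.eventually (unif_nonsing A κbar hκbar ρ hρ hρ1))
  obtain ⟨e, he, hsub⟩ := mem_nhdsGT_iff_exists_Ioc_subset.1 ev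
  refine ⟨e, he, fun ε hε => ?_⟩
  obtain ⟨h1, h2⟩ := hsub hε
  refine ⟨h1, fun κ hκ z s hz hz2 hs => ?_⟩
  exact h2 κ hκ (z, s) ⟨⟨hz, hz2⟩, by simpa using hs⟩
def delayLin {n : ℕ} (κ : ℕ) (A E : Matrix (Fin n) (Fin n) ℂ) (c d e : ℂ) :
    (Fin (κ + 1) × Fin n → ℂ) →ₗ[ℂ] (Fin (κ + 1) × Fin n → ℂ) where
  toFun W := fun p => if h : p.1.val < κ then e * W (⟨p.1.val + 1, by omega⟩, p.2)
    else e * (A *ᵥ fun b => W (Fin.last κ, b)) p.2 - c * (E *ᵥ fun b => W (Fin.last κ, b)) p.2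
      - d * (E *ᵥ fun b => W (0, b)) p.2
  map_add' W V := by
    ext p
    have h1 : ∀ M : Matrix (Fin n) (Fin n) ℂ, ∀ j : Fin (κ + 1),
        (M *ᵥ fun b => W (j, b) + V (j, b)) = (M *ᵥ fun b => W (j, b)) + M *ᵥ fun b => V (j, b) := by
      intro M j
      rw [← Matrix.mulVec_add]; rfl
    simp only [Pi.add_apply]
    split_ifs
    · ring
    · simp only [h1, Pi.add_apply]; ring
  map_smul' r W := by
    ext p
    have h1 : ∀ M : Matrix (Fin n) (Fin n) ℂ, ∀ j : Fin (κ + 1),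
        (M *ᵥ fun b => r * W (j, b)) = r • (M *ᵥ fun b => W (j, b)) := by
      intro M j
      rw [← Matrix.mulVec_smul]; rfl
    simp only [Pi.smul_apply, smul_eq_mul, RingHom.id_apply]
    split_ifs
    · ring
    · simp only [h1, Pi.smul_apply, smul_eq_mul]; ring

lemma delay_eig {n : ℕ} (κ : ℕ) (A E : Matrix (Fin n) (Fin n) ℂ) (c d z : ℂ) (hz : z ≠ 0)
    (W : Fin (κ + 1) × Fin n → ℂ) (hW : W ≠ 0)
    (h : delayLin κ A E c d 1 W = z • W) :
    ∃ v : Fin n → ℂ, v ≠ 0 ∧ z • v = A *ᵥ v - (c + d * (z ^ κ)⁻¹) • (E *ᵥ v) := by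
  have hstep : ∀ j : ℕ, ∀ hj : j < κ + 1, ∀ b, W (⟨j, hj⟩, b) = z ^ j * W (0, b) := by
    intro j
    induction j with
    | zero => intro hj b; simp
    | succ j ih =>
      intro hj b
      have h1 := congrFun h (⟨j, by omega⟩, b)
      have hjk : j < κ := by omega
      simp only [delayLin, LinearMap.coe_mk, AddHom.coe_mk, hjk, dif_pos, Pi.smul_apply,
        smul_eq_mul, one_mul] at h1
      rw [h1, ih (by omega), pow_succ]; ring
  have hlast : ∀ b, W (0, b) = (z ^ κ)⁻¹ * W (Fin.last κ, b) := by
    intro b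
    have := hstep κ (by omega) b
    change W (Fin.last κ, b) = _ at this
    rw [this]
    field_simp
  refine ⟨fun b => W (Fin.last κ, b), ?_, ?_⟩
  · intro h0
    apply hW
    ext ⟨j, b⟩
    have h1 := hstep j.val j.isLt b
    have h2 := congrFun h0 b
    simp only [Pi.zero_apply] at h2
    rw [hlast, h2] at h1
    simpa using h1
  · have hv0 : (fun b => W (0, b)) = (z ^ κ)⁻¹ • fun b => W (Fin.last κ, b) := by
      ext b; simp [hlast b]
    ext a
    have h1 := congrFun h (Fin.last κ, a)
    simp only [delayLin, LinearMap.coe_mk, AddHom.coe_mk, Fin.val_last, lt_irrefl, dif_neg,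
      not_false_eq_true, Pi.smul_apply, smul_eq_mul, one_mul] at h1
    simp only [Pi.smul_apply, Pi.sub_apply, smul_eq_mul]
    rw [← h1, hv0, Matrix.mulVec_smul]
    simp only [Pi.smul_apply, smul_eq_mul]
    ring

lemma delay_stable {n m : ℕ} (A : Matrix (Fin n) (Fin n) ℝ) (B : Matrix (Fin n) (Fin m) ℝ) (ε : ℝ)
    (hε : 0 < ε) (P : Matrix (Fin n) (Fin n) ℝ) (h : IsDARESol A B ε P) (ρ : ℝ) (hρ : 1 ≤ ρ)
    (hsmall : ∀ u : Fin m → ℂ, ρ ^ 2 * (star u ⬝ᵥ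
      (((Bᵀ * P * B).map Complex.ofReal) *ᵥ u)).re ≤ 1 / 2 * (star u ⬝ᵥ u).re)
    (κ : ℕ)
    (hns : ∀ z s : ℂ, ‖z‖ = 1 → ρ * (z ^ κ).re ≤ 3 / 4 → ‖s‖ ≤ ρ →
        (z • (1 : Matrix (Fin n) (Fin n) ℂ) - A.map Complex.ofReal
          + s • (B * gainK A B P).map Complex.ofReal).det ≠ 0) :
    SchurStableC (LinearMap.toMatrix' (delayLin κ (A.map Complex.ofReal)
      ((B * gainK A B P).map Complex.ofReal) 0 ρ 1)) := by
  set Ac := A.map Complex.ofReal with hAc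
  set E := (B * gainK A B P).map Complex.ofReal with hE
  have hcomb : ∀ t : ℂ, LinearMap.toMatrix' (delayLin κ Ac E ρ 0 1)
      + t • LinearMap.toMatrix' (delayLin κ Ac E (-ρ) ρ 0)
      = LinearMap.toMatrix' (delayLin κ Ac E (ρ * (1 - t)) (ρ * t) 1) := by
    intro t
    rw [← map_smul, ← map_add]
    congr 1
    apply LinearMap.ext
    intro W
    ext p
    simp only [delayLin, LinearMap.add_apply, LinearMap.smul_apply, LinearMap.coe_mk,
      AddHom.coe_mk, Pi.add_apply, Pi.smul_apply, smul_eq_mul]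
    split_ifs
    · ring
    · ring
  have hfin : LinearMap.toMatrix' (delayLin κ Ac E 0 ρ 1)
      = LinearMap.toMatrix' (delayLin κ Ac E ρ 0 1)
        + LinearMap.toMatrix' (delayLin κ Ac E (-ρ) ρ 0) := by
    have := hcomb 1
    rw [one_smul] at this
    rw [this]; simp
  rw [hfin]
  apply homotopy
  · intro z hz
    by_contra hlt
    push Not at hlt
    obtain ⟨W, hW, heq⟩ := (mem_spec_iff_vec _ _).1 hz
    rw [LinearMap.toMatrix'_mulVec] at heq
    have hz0 : z ≠ 0 := by
      intro h0; rw [h0] at hlt; simp at hlt; linarith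
    obtain ⟨v, hv, hv2⟩ := delay_eig κ Ac E ρ 0 z hz0 W hW heq
    refine lyap A B ε hε P h ρ hsmall ρ z (by simp; linarith) ?_ hlt v hv ?_
    · rw [Complex.norm_real, Real.norm_eq_abs, abs_of_nonneg (by linarith)]
    · simpa using hv2
  · intro t ht z hz hmem
    rw [hcomb] at hmem
    obtain ⟨W, hW, heq⟩ := (mem_spec_iff_vec _ _).1 hmem
    rw [LinearMap.toMatrix'_mulVec] at heq
    have hz0 : z ≠ 0 := by
      intro h0; rw [h0] at hz; simp at hz
    obtain ⟨v, hv, hv2⟩ := delay_eig κ Ac E _ _ z hz0 W hW heq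
    have hnk : ‖z ^ κ‖ = 1 := by rw [norm_pow, hz, one_pow]
    have hre : ((z ^ κ)⁻¹).re = (z ^ κ).re := by
      rw [Complex.inv_re, Complex.normSq_eq_norm_sq, hnk]; simp
    have hsn : ‖(ρ : ℂ) * (1 - t) + ρ * t * (z ^ κ)⁻¹‖ ≤ ρ := by
      refine (norm_add_le _ _).trans ?_
      rw [norm_mul, norm_mul, norm_mul, norm_inv, hnk, ← Complex.ofReal_one, ← Complex.ofReal_sub,
        Complex.norm_real, Complex.norm_real, Complex.norm_real, Real.norm_eq_abs,
        Real.norm_eq_abs, Real.norm_eq_abs, abs_of_nonneg (by linarith : 0 ≤ ρ),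
        abs_of_nonneg ht.1, abs_of_nonneg (by linarith [ht.2] : 0 ≤ 1 - t)]
      apply le_of_eq; ring
    by_cases hc : ρ * (z ^ κ).re ≤ 3 / 4
    · apply hns z _ hz hc hsn
      apply Matrix.exists_mulVec_eq_zero_iff.1
      refine ⟨v, hv, ?_⟩
      rw [Matrix.add_mulVec, Matrix.sub_mulVec, Matrix.smul_mulVec, Matrix.smul_mulVec,
        Matrix.one_mulVec, hv2]
      abel
    · push Not at hc
      refine lyap A B ε hε P h ρ hsmall _ z ?_ hsn hz.ge v hv hv2
      have e1 : ((ρ : ℂ) * (1 - t) + ρ * t * (z ^ κ)⁻¹).re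
          = ρ * (1 - t) + t * (ρ * (z ^ κ).re) := by
        rw [← hre]
        have : (ρ : ℂ) * (1 - t) + ρ * t * (z ^ κ)⁻¹
          = ((ρ * (1 - t) : ℝ) : ℂ) + ((ρ * t : ℝ) : ℂ) * (z ^ κ)⁻¹ := by push_cast; ring
        rw [this, Complex.add_re, Complex.ofReal_re, Complex.re_ofReal_mul]; ring
      rw [e1]
      nlinarith [ht.1, ht.2, mul_nonneg ht.1 (sub_nonneg.2 hc.le),
        mul_nonneg (sub_nonneg.2 ht.2) (sub_nonneg.2 hρ)]

lemma delay_conv {n m : ℕ} (A : Matrix (Fin n) (Fin n) ℝ) (B : Matrix (Fin n) (Fin m) ℝ) (ε : ℝ)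
    (hε : 0 < ε) (P : Matrix (Fin n) (Fin n) ℝ) (h : IsDARESol A B ε P) (ρ : ℝ) (hρ : 1 ≤ ρ)
    (hsmall : ∀ u : Fin m → ℂ, ρ ^ 2 * (star u ⬝ᵥ
      (((Bᵀ * P * B).map Complex.ofReal) *ᵥ u)).re ≤ 1 / 2 * (star u ⬝ᵥ u).re)
    (κ : ℕ)
    (hns : ∀ z s : ℂ, ‖z‖ = 1 → ρ * (z ^ κ).re ≤ 3 / 4 → ‖s‖ ≤ ρ →
        (z • (1 : Matrix (Fin n) (Fin n) ℂ) - A.map Complex.ofReal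
          + s • (B * gainK A B P).map Complex.ofReal).det ≠ 0)
    (w g : ℕ → Fin n → ℝ) (hw : ∀ k, w (k + κ + 1) = A *ᵥ w (k + κ)
      - ρ • ((B * gainK A B P) *ᵥ w k) + g k) (hg : Tendsto g atTop (𝓝 0)) :
    Tendsto w atTop (𝓝 0) := by
  have hS := delay_stable A B ε hε P h ρ hρ hsmall κ hns
  let W : ℕ → Fin (κ + 1) × Fin n → ℂ := fun k p => ((w (k + p.1.val) p.2 : ℝ) : ℂ)
  let G : ℕ → Fin (κ + 1) × Fin n → ℂ := fun k p =>
    if p.1.val < κ then 0 else ((g k p.2 : ℝ) : ℂ)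
  have hmap : ∀ (M : Matrix (Fin n) (Fin n) ℝ) (v : Fin n → ℝ) (a : Fin n),
      ((M.map Complex.ofReal) *ᵥ fun b => ((v b : ℝ) : ℂ)) a = (((M *ᵥ v) a : ℝ) : ℂ) := by
    intro M v a
    simp [Matrix.mulVec, dotProduct]
  have hconv : Tendsto W atTop (𝓝 0) := by
    refine iss_C _ hS W G ?_ ?_
    · intro k
      rw [LinearMap.toMatrix'_mulVec]
      ext ⟨j, a⟩
      simp only [delayLin, LinearMap.coe_mk, AddHom.coe_mk, Pi.add_apply, W, G, one_mul, zero_mul,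
        sub_zero, hmap, Fin.val_last, Fin.val_zero, add_zero]
      split_ifs with hj
      · rw [add_zero]
        rw [show k + 1 + j.val = k + (j.val + 1) by ring]
      · have hjk : j.val = κ := by omega
        rw [hjk, show k + 1 + κ = k + κ + 1 by ring, hw]
        simp
    · rw [tendsto_pi_nhds]
      rintro ⟨j, a⟩
      simp only [G]
      split_ifs
      · exact tendsto_const_nhds
      · have := (Complex.continuous_ofReal.tendsto 0).comp ((tendsto_pi_nhds.1 hg) a)
        simpa [Function.comp_def] using this
  rw [tendsto_pi_nhds] at hconv ⊢
  intro a
  have h1 := hconv (0, a)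
  have h2 := (Complex.continuous_re.tendsto _).comp h1
  simpa [W, Function.comp_def] using h2
lemma lap_sum {N : ℕ} {V : Type*} [AddCommGroup V] [Module ℝ V] (a : Fin N → Fin N → ℝ)
    (ι : Fin N → ℝ) (ha : ∀ i, a i i = 0) (X : Fin N → V) (i : Fin N) :
    ∑ j, lapLbar a ι i j • X j = (dIn a i + ι i) • X i - ∑ j, a i j • X j := by
  have h1 : ∀ j, lapLbar a ι i j • X j
      = (if i = j then (dIn a i + ι i) • X i else 0) - a i j • X j := by
    intro j
    by_cases h : i = j
    · subst h
      simp [lapLbar, lapL, ha]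
    · simp [lapLbar, lapL, h]
  simp only [h1, Finset.sum_sub_distrib, Finset.sum_ite_eq, Finset.mem_univ, if_true]

lemma meas_eq {N n q : ℕ} (C : Matrix (Fin q) (Fin n) ℝ) (a : Fin N → Fin N → ℝ)
    (ι : Fin N → ℝ) (ha : ∀ i, a i i = 0) (x : Fin N → Fin n → ℝ) (r : Fin n → ℝ) (i : Fin N) :
    ∑ j, a i j • (C *ᵥ x i - C *ᵥ x j) + ι i • (C *ᵥ x i - C *ᵥ r)
      = C *ᵥ (∑ j, lapLbar a ι i j • (x j - r)) := by
  have h2 : ∑ j, a i j • (C *ᵥ x i - C *ᵥ x j)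
      = dIn a i • (C *ᵥ (x i - r)) - ∑ j, a i j • (C *ᵥ (x j - r)) := by
    rw [dIn, Finset.sum_smul, ← Finset.sum_sub_distrib]
    refine Finset.sum_congr rfl fun j _ => ?_
    rw [← smul_sub, ← Matrix.mulVec_sub, ← Matrix.mulVec_sub]
    congr 2; abel
  rw [lap_sum a ι ha (fun j => x j - r) i, Matrix.mulVec_sub, Matrix.mulVec_smul,
    Matrix.mulVec_sum, h2, ← Matrix.mulVec_sub]
  simp only [Matrix.mulVec_smul]
  rw [add_smul]; abel

lemma Dbar_apply {N : ℕ} (a : Fin N → Fin N → ℝ) (ι : Fin N → ℝ) (ha : ∀ i j, 0 ≤ a i j)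
    (i j : Fin N) :
    DbarM a ι i j = (1 : Matrix (Fin N) (Fin N) ℝ) i j - (2 + dIn a i)⁻¹ * lapLbar a ι i j := by
  have hpos : ∀ i, 2 + dIn a i ≠ 0 := by
    intro i
    have : 0 ≤ dIn a i := Finset.sum_nonneg fun j _ => ha i j
    linarith
  have h1 : ((2 : ℝ) • (1 : Matrix (Fin N) (Fin N) ℝ) + Matrix.diagonal (dIn a))⁻¹
      = Matrix.diagonal fun i => (2 + dIn a i)⁻¹ := by
    apply Matrix.inv_eq_right_inv
    have : (2 : ℝ) • (1 : Matrix (Fin N) (Fin N) ℝ) + Matrix.diagonal (dIn a)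
        = Matrix.diagonal fun i => 2 + dIn a i := by
      ext i j
      by_cases h : i = j
      · subst h; simp
      · simp [h]
    rw [this, Matrix.diagonal_mul_diagonal]
    simp [hpos]
  rw [DbarM, h1, Matrix.sub_apply, Matrix.diagonal_mul]

lemma kron_conv {N n : ℕ} (a : Fin N → Fin N → ℝ) (ι : Fin N → ℝ) (ha : ∀ i j, 0 ≤ a i j)
    (hD : SchurStable (DbarM a ι)) (A : Matrix (Fin n) (Fin n) ℝ) (hA : EigInClosedUnitDisc A)
    (e g : Fin N → ℕ → Fin n → ℝ)
    (he : ∀ i k, e i (k + 1) = A *ᵥ e i k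
      - A *ᵥ ((2 + dIn a i)⁻¹ • ∑ j, lapLbar a ι i j • e j k) + g i k)
    (hg : ∀ i, Tendsto (g i) atTop (𝓝 0)) (i : Fin N) : Tendsto (e i) atTop (𝓝 0) := by
  have h := iss_kron (DbarM a ι) hD A hA (fun k (p : Fin N × Fin n) => e p.1 k p.2)
    (fun k p => g p.1 k p.2) ?_ ?_
  · rw [tendsto_pi_nhds] at h ⊢
    intro b
    exact h (i, b)
  · intro k
    ext ⟨i, b⟩
    have h1 : ((DbarM a ι ⊗ₖ A) *ᵥ fun p : Fin N × Fin n => e p.1 k p.2) (i, b)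
        = ∑ j, DbarM a ι i j * (A *ᵥ e j k) b := by
      simp only [Matrix.mulVec, dotProduct, Fintype.sum_prod_type, Matrix.kroneckerMap_apply]
      refine Finset.sum_congr rfl fun j _ => ?_
      rw [Finset.mul_sum]
      refine Finset.sum_congr rfl fun c _ => ?_
      ring
    simp only [Pi.add_apply]
    rw [h1, he]
    simp only [Dbar_apply a ι ha, sub_mul, Finset.sum_sub_distrib, Matrix.one_apply, ite_mul,
      one_mul, zero_mul, Finset.sum_ite_eq, Finset.mem_univ, if_true, Matrix.mulVec_smul,
      Matrix.mulVec_sum, Pi.add_apply, Pi.sub_apply, Pi.smul_apply, smul_eq_mul,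
      Finset.sum_apply, Finset.mul_sum, mul_assoc]
  · rw [tendsto_pi_nhds]
    rintro ⟨i, b⟩
    exact (tendsto_pi_nhds.1 (hg i)) b

lemma mulVec_tendsto {n m : ℕ} (A : Matrix (Fin m) (Fin n) ℝ) (g : ℕ → Fin n → ℝ)
    (hg : Tendsto g atTop (𝓝 0)) : Tendsto (fun k => A *ᵥ g k) atTop (𝓝 0) := by
  have hc : Continuous fun v : Fin n → ℝ => A *ᵥ v := by fun_prop
  have := (hc.tendsto 0).comp hg
  simpa [Function.comp_def] using this

/-- Theorem 2 of the paper: scalable regulated state synchronization with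
partial-state coupling in the presence of unknown non-uniform input delays. If
`κ̄·ω_max < π/2` and `A − FC` is Schur stable, there exist `ρ > 1/2` and `ε* > 0`,
depending only on the agent model and `κ̄`, such that for every `ε ∈ (0, ε*]`, every
network (with `D̄` Schur stable), all delays `κ_i ∈ {0,…,κ̄}`, and every solution of
the closed-loop system, `x_i(k) − x_r(k) → 0` for every agent `i`. Time is shifted by
`κbar`, so actual time `k` corresponds to index `k + κbar` for the agent signals. -/
theorem regulated_sync_partialstate {n m q : ℕ}
    (A : Matrix (Fin n) (Fin n) ℝ) (B : Matrix (Fin n) (Fin m) ℝ)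
    (C : Matrix (Fin q) (Fin n) ℝ)
    (hstab : Stabilizable A B) (hdet : Detectable C A) (hA : EigInClosedUnitDisc A)
    (κbar : ℕ) (hκbar : (κbar : ℝ) * omegaMax A < Real.pi / 2)
    (F : Matrix (Fin n) (Fin q) ℝ) (hF : SchurStable (A - F * C))
    (P : ℝ → Matrix (Fin n) (Fin n) ℝ)
    (hP : ∀ ε > (0 : ℝ), IsDARESol A B ε (P ε)) :
    ∃ ρ : ℝ, 1 / 2 < ρ ∧ ∃ εstar > (0 : ℝ), ∀ ε ∈ Set.Ioc (0 : ℝ) εstar,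
      ∀ (N : ℕ) (a : Fin N → Fin N → ℝ) (ι : Fin N → ℝ),
        (∀ i j, 0 ≤ a i j) → (∀ i, a i i = 0) → (∀ i, ι i = 0 ∨ ι i = 1) →
        SchurStable (DbarM a ι) →
        ∀ κ : Fin N → ℕ, (∀ i, κ i ≤ κbar) →
        ∀ xr : ℕ → Fin n → ℝ, (∀ k : ℕ, xr (k + 1) = A.mulVec (xr k)) →
        ∀ yr : ℕ → Fin q → ℝ, (∀ k : ℕ, yr k = C.mulVec (xr k)) →
        ∀ (x xhat χ : Fin N → ℕ → Fin n → ℝ) (y : Fin N → ℕ → Fin q → ℝ)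
          (u : Fin N → ℕ → Fin m → ℝ),
        (∀ i k, y i k = C.mulVec (x i k)) →
        (∀ i k, x i (k + κbar + 1)
            = A.mulVec (x i (k + κbar)) + B.mulVec (u i (k + κbar - κ i))) →
        (∀ i k, xhat i (k + κbar + 1)
            = A.mulVec (xhat i (k + κbar))
              + B.mulVec ((2 + dIn a i)⁻¹ •
                  ∑ j, lapLbar a ι i j • u j (k + κbar - κ j))
              + F.mulVec ((2 + dIn a i)⁻¹ •
                  (∑ j, a i j • (y i (k + κbar) - y j (k + κbar))
                    + ι i • (y i (k + κbar) - yr k))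
                - C.mulVec (xhat i (k + κbar)))) →
        (∀ i k, χ i (k + κbar + 1)
            = A.mulVec (χ i (k + κbar)) + B.mulVec (u i (k + κbar - κ i))
              + A.mulVec (xhat i (k + κbar))
              - A.mulVec ((2 + dIn a i)⁻¹ • ∑ j, lapLbar a ι i j • χ j (k + κbar))) →
        (∀ i k, u i k = -(ρ • (gainK A B (P ε)).mulVec (χ i k))) →
        ∀ i, Tendsto (fun k => x i (k + κbar) - xr k) atTop (nhds 0) := by
  have hθ0 : 0 ≤ (κbar : ℝ) * omegaMax A := mul_nonneg (Nat.cast_nonneg _) (omegaMax_nonneg A)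
  have hcos : 0 < Real.cos (κbar * omegaMax A) :=
    Real.cos_pos_of_mem_Ioo ⟨by linarith [Real.pi_pos], hκbar⟩
  have hρ1 : (Real.cos (κbar * omegaMax A))⁻¹ * Real.cos (κbar * omegaMax A) = 1 :=
    inv_mul_cancel₀ hcos.ne'
  have hρ : 1 ≤ (Real.cos (κbar * omegaMax A))⁻¹ :=
    (one_le_inv₀ hcos).2 (Real.cos_le_one _)
  generalize (Real.cos (κbar * omegaMax A))⁻¹ = ρ at hρ1 hρ
  refine ⟨ρ, by linarith, ?_⟩
  obtain ⟨e0, he0, hmain⟩ := eps_exists A B hstab hA κbar hκbar P hP ρ (by linarith) hρ1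
  refine ⟨e0, he0, ?_⟩
  intro ε hε N a ι ha haa _ hD κ hκ xr hxr yr hyr x xhat χ y u hy hx hxh hχ hu
  obtain ⟨hsmall, hns⟩ := hmain ε hε
  have hxt : ∀ i k, x i (k + 1 + κbar) - xr (k + 1)
      = A *ᵥ (x i (k + κbar) - xr k) + B *ᵥ u i (k + κbar - κ i) := by
    intro i k
    rw [show k + 1 + κbar = k + κbar + 1 by ring, hx, hxr, Matrix.mulVec_sub]
    abel
  have hpull : ∀ {p : ℕ} (M : Matrix (Fin p) (Fin n) ℝ) (i : Fin N) (X : Fin N → Fin n → ℝ),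
      M *ᵥ ((2 + dIn a i)⁻¹ • ∑ j, lapLbar a ι i j • X j)
        = (2 + dIn a i)⁻¹ • ∑ j, lapLbar a ι i j • (M *ᵥ X j) := by
    intro p M i X
    rw [Matrix.mulVec_smul, Matrix.mulVec_sum]
    simp only [Matrix.mulVec_smul]
  have hpullB : ∀ (i : Fin N) (X : Fin N → Fin m → ℝ),
      B *ᵥ ((2 + dIn a i)⁻¹ • ∑ j, lapLbar a ι i j • X j)
        = (2 + dIn a i)⁻¹ • ∑ j, lapLbar a ι i j • (B *ᵥ X j) := by
    intro i X
    rw [Matrix.mulVec_smul, Matrix.mulVec_sum]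
    simp only [Matrix.mulVec_smul]
  let Z : Fin N → ℕ → Fin n → ℝ := fun i k =>
    (2 + dIn a i)⁻¹ • ∑ j, lapLbar a ι i j • (x j (k + κbar) - xr k)
  have hZ : ∀ i k, Z i (k + 1) = A *ᵥ Z i k + B *ᵥ ((2 + dIn a i)⁻¹ •
                  ∑ j, lapLbar a ι i j • u j (k + κbar - κ j)) := by
    intro i k
    simp only [Z]
    rw [hpull A, hpullB, ← smul_add, ← Finset.sum_add_distrib]
    simp only [← smul_add, hxt]
  let eh : Fin N → ℕ → Fin n → ℝ := fun i k => xhat i (k + κbar) - Z i k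
  have heh : ∀ i, Tendsto (eh i) atTop (𝓝 0) := by
    intro i
    refine iss_R (A - F * C) hF (eh i) (fun _ => 0) ?_ tendsto_const_nhds
    intro k
    simp only [eh]
    rw [hZ, show k + 1 + κbar = k + κbar + 1 by ring, hxh]
    simp only [hy, hyr]
    rw [meas_eq C a ι haa (fun j => x j (k + κbar)) (xr k) i, ← Matrix.mulVec_smul]
    simp only [Matrix.sub_mulVec, Matrix.mulVec_sub, ← Matrix.mulVec_mulVec, Z]
    abel
  let e : Fin N → ℕ → Fin n → ℝ := fun i k => χ i (k + κbar) - (x i (k + κbar) - xr k)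
  have he : ∀ i, Tendsto (e i) atTop (𝓝 0) := by
    refine kron_conv a ι ha hD A hA e (fun i k => A *ᵥ eh i k) ?_
      (fun i => mulVec_tendsto A _ (heh i))
    intro i k
    have h1 : (2 + dIn a i)⁻¹ • ∑ j, lapLbar a ι i j • e j k
        = (2 + dIn a i)⁻¹ • ∑ j, lapLbar a ι i j • χ j (k + κbar) - Z i k := by
      simp only [Z, e]
      rw [← smul_sub, ← Finset.sum_sub_distrib]
      simp only [← smul_sub]
    rw [h1]
    simp only [e, eh]
    rw [hxt, show k + 1 + κbar = k + κbar + 1 by ring, hχ]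
    simp only [Matrix.mulVec_sub]
    abel
  intro i
  refine delay_conv A B ε hε.1 (P ε) (hP ε hε.1) ρ hρ hsmall (κ i)
    (fun z s => hns (κ i) (hκ i) z s) _
    (fun k => -(ρ • ((B * gainK A B (P ε)) *ᵥ e i k))) ?_ ?_
  · intro k
    rw [show k + κ i + 1 + κbar = (k + κ i) + 1 + κbar by ring, hxt,
      show k + κ i + κbar - κ i = k + κbar by omega, hu]
    simp only [e, Matrix.mulVec_neg, Matrix.mulVec_smul, Matrix.mulVec_mulVec, Matrix.mulVec_sub,
      smul_sub]
    abel
  · have := ((mulVec_tendsto (B * gainK A B (P ε)) _ (he i)).const_smul ρ).neg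
    simpa using this
end
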